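/- Let n ≥ 2, let Ω, Ω̃ ⊆ ℝⁿ be bounded, uniformly convex open domains with smooth boundary with defining functions h̃ and h respectively, and suppose the closure of Ω̃ is contained in the open unit ball B₁(0). Then there exists a constant C₃₀ > 0, depending only on Ω and Ω̃, such that for every strictly convex solution (u, c) of the second boundary value problem for the Lorentz mean curvature operator on (Ω, Ω̃), with Legendre transform ũ, one has: for every y ∈ ∂Ω̃ and every unit vector ς ∈ ℝⁿ tangential to ∂Ω̃ at y (i.e., ⟨ς, ∇h(y)⟩ = 0 and |ς| = 1), ⟨ς, D²ũ(y) ς⟩ ≤ C₃₀. -/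

import Mathlib

noncomputable section
open MeasureTheory
open scoped RealInnerProductSpace

/-- The `i`-th standard basis vector of `ℝⁿ`. -/
def ev (n : ℕ) (i : Fin n) : EuclideanSpace ℝ (Fin n) := EuclideanSpace.single i 1

/-- Lorentz mean curvature operator `M[u] x = ∑ i, ∂ᵢ (∂ᵢ u / √(1 - |∇u|²)) x`. -/
def MOp (n : ℕ) (u : EuclideanSpace ℝ (Fin n) → ℝ) (x : EuclideanSpace ℝ (Fin n)) : ℝ :=
  ∑ i : Fin n,
    fderiv ℝ (fun y => fderiv ℝ u y (ev n i) / Real.sqrt (1 - ‖gradient u y‖ ^ 2)) x (ev n i)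

/-- Euclidean mean curvature operator `E[u] x = ∑ i, ∂ᵢ (∂ᵢ u / √(1 + |∇u|²)) x`. -/
def EOp (n : ℕ) (u : EuclideanSpace ℝ (Fin n) → ℝ) (x : EuclideanSpace ℝ (Fin n)) : ℝ :=
  ∑ i : Fin n,
    fderiv ℝ (fun y => fderiv ℝ u y (ev n i) / Real.sqrt (1 + ‖gradient u y‖ ^ 2)) x (ev n i)

/-- `Ω` is a uniformly convex domain with smooth boundary, exhibited by the defining
function `h` with uniform concavity constant `θ`:  `h` is smooth, `Ω = {h > 0}`,
`|∇h| = 1` on `∂Ω`, and `⟨ξ, D²h(p) ξ⟩ ≤ -θ |ξ|²` for all `p, ξ`. -/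
def IsUnifConvexDefFn (n : ℕ) (Ω : Set (EuclideanSpace ℝ (Fin n)))
    (h : EuclideanSpace ℝ (Fin n) → ℝ) (θ : ℝ) : Prop :=
  ContDiff ℝ (⊤ : ℕ∞) h ∧ Ω = {p | 0 < h p} ∧
  (∀ p ∈ frontier Ω, ‖gradient h p‖ = 1) ∧ 0 < θ ∧
  ∀ p ξ : EuclideanSpace ℝ (Fin n), ⟪ξ, fderiv ℝ (gradient h) p ξ⟫ ≤ -θ * ‖ξ‖ ^ 2

/-- `u` is smooth on the closure of `Ω` (i.e. on an open neighbourhood of it). -/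
def SmoothOnClosure (n : ℕ) (Ω : Set (EuclideanSpace ℝ (Fin n)))
    (u : EuclideanSpace ℝ (Fin n) → ℝ) : Prop :=
  ∃ U : Set (EuclideanSpace ℝ (Fin n)), IsOpen U ∧ closure Ω ⊆ U ∧ ContDiffOn ℝ (⊤ : ℕ∞) u U

/-- `(u, c)` is a strictly convex solution of the second boundary value problem for the
Lorentz mean curvature operator on `(Ω, Ω')`: `u` is smooth up to the boundary, spacelike
(`|∇u| < 1`), has positive definite Hessian `D²u` on the closure of `Ω`, its gradient map
is a bijection from `Ω` onto `Ω'`, and `M[u] = c` on `Ω`. -/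
def IsSol (n : ℕ) (Ω Ω' : Set (EuclideanSpace ℝ (Fin n)))
    (u : EuclideanSpace ℝ (Fin n) → ℝ) (c : ℝ) : Prop :=
  SmoothOnClosure n Ω u ∧
  (∀ x ∈ closure Ω, ‖gradient u x‖ < 1) ∧
  (∀ x ∈ closure Ω, ∀ ξ : EuclideanSpace ℝ (Fin n), ξ ≠ 0 →
      0 < ⟪ξ, fderiv ℝ (gradient u) x ξ⟫) ∧
  Set.BijOn (gradient u) Ω Ω' ∧
  (∀ x ∈ Ω, MOp n u x = c)

/-- `(u, c)` is a strictly convex solution of the second boundary value problem for the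
Euclidean mean curvature operator on `(Ω, Ω')`. -/
def IsSolE (n : ℕ) (Ω Ω' : Set (EuclideanSpace ℝ (Fin n)))
    (u : EuclideanSpace ℝ (Fin n) → ℝ) (c : ℝ) : Prop :=
  SmoothOnClosure n Ω u ∧
  (∀ x ∈ closure Ω, ∀ ξ : EuclideanSpace ℝ (Fin n), ξ ≠ 0 →
      0 < ⟪ξ, fderiv ℝ (gradient u) x ξ⟫) ∧
  Set.BijOn (gradient u) Ω Ω' ∧
  (∀ x ∈ Ω, EOp n u x = c)

/-- `ut` is the Legendre transform of `u`: it is smooth up to the boundary of `Ω'`,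
satisfies `ut (∇u x) = ⟨x, ∇u x⟩ - u x` and `∇ut (∇u x) = x` for `x ∈ Ω`. -/
def IsLegendre (n : ℕ) (Ω Ω' : Set (EuclideanSpace ℝ (Fin n)))
    (u ut : EuclideanSpace ℝ (Fin n) → ℝ) : Prop :=
  SmoothOnClosure n Ω' ut ∧
  (∀ x ∈ Ω, ut (gradient u x) = ⟪x, gradient u x⟫ - u x) ∧
  (∀ x ∈ Ω, gradient ut (gradient u x) = x)

/-- The coefficient matrix `s_ij(p) = (δ_ij + pᵢpⱼ/(1 - |p|²)) / √(1 - |p|²)` of the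
Lorentz mean curvature operator written in nondivergence form. -/
def sMat (n : ℕ) (p : EuclideanSpace ℝ (Fin n)) (i j : Fin n) : ℝ :=
  ((if i = j then (1 : ℝ) else 0) + p i * p j / (1 - ‖p‖ ^ 2)) / Real.sqrt (1 - ‖p‖ ^ 2)

/-- `Ω` has smooth boundary: it is the superlevel set of a smooth function whose
gradient does not vanish on the boundary. -/
def HasSmoothBoundary (n : ℕ) (Ω : Set (EuclideanSpace ℝ (Fin n))) : Prop :=
  ∃ g : EuclideanSpace ℝ (Fin n) → ℝ, ContDiff ℝ (⊤ : ℕ∞) g ∧ Ω = {p | 0 < g p} ∧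
    ∀ p ∈ frontier Ω, gradient g p ≠ 0

/-- `B(p) = Iₙ + p pᵀ / (v (1 + v))`, `v = √(1 - |p|²)`: the positive square root of the
inverse induced metric of a spacelike graph with gradient `p`. -/
def sqB (n : ℕ) (p : EuclideanSpace ℝ (Fin n)) : Matrix (Fin n) (Fin n) ℝ :=
  1 + (Real.sqrt (1 - ‖p‖ ^ 2) * (1 + Real.sqrt (1 - ‖p‖ ^ 2)))⁻¹ •
      Matrix.of fun i j => p i * p j

/-- `B'(p) = Iₙ - p pᵀ / (1 + v)`, `v = √(1 - |p|²)`: the square root of the induced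
metric of a spacelike graph with gradient `p`. -/
def sqBinv (n : ℕ) (p : EuclideanSpace ℝ (Fin n)) : Matrix (Fin n) (Fin n) ℝ :=
  1 - (1 + Real.sqrt (1 - ‖p‖ ^ 2))⁻¹ • Matrix.of fun i j => p i * p j

namespace LMC

open Filter Topology Set

section calc1

variable {E : Type*} [NormedAddCommGroup E] [InnerProductSpace ℝ E]
variable {F : Type*} [NormedAddCommGroup F] [NormedSpace ℝ F]

/-- Directional derivative. -/
def D (v : E) (q : E → F) : E → F := fun z => fderiv ℝ q z v

lemma smAt {U : Set E} (hU : IsOpen U) {q : E → F} (hq : ContDiffOn ℝ (⊤ : ℕ∞) q U) {z : E}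
    (hz : z ∈ U) : ContDiffAt ℝ (⊤ : ℕ∞) q z := hq.contDiffAt (hU.mem_nhds hz)

lemma diffAt {U : Set E} (hU : IsOpen U) {q : E → F} (hq : ContDiffOn ℝ (⊤ : ℕ∞) q U) {z : E}
    (hz : z ∈ U) : DifferentiableAt ℝ q z := (smAt hU hq hz).differentiableAt (by simp)

lemma fderiv_smooth {U : Set E} (hU : IsOpen U) {q : E → F} (hq : ContDiffOn ℝ (⊤ : ℕ∞) q U) :
    ContDiffOn ℝ (⊤ : ℕ∞) (fderiv ℝ q) U := hq.fderiv_of_isOpen hU (by simp)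

lemma D_smooth {U : Set E} (hU : IsOpen U) {q : E → F} (hq : ContDiffOn ℝ (⊤ : ℕ∞) q U) (v : E) :
    ContDiffOn ℝ (⊤ : ℕ∞) (D v q) U :=
  (fderiv_smooth hU hq).clm_apply contDiffOn_const

lemma D_D {U : Set E} (hU : IsOpen U) {q : E → F} (hq : ContDiffOn ℝ (⊤ : ℕ∞) q U) {z : E}
    (hz : z ∈ U) (v w : E) : D v (D w q) z = fderiv ℝ (fderiv ℝ q) z v w := by
  have := diffAt hU (fderiv_smooth hU hq) hz
  unfold D
  rw [fderiv_clm_apply this (by fun_prop)]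
  simp

lemma D_comm {U : Set E} (hU : IsOpen U) {q : E → F} (hq : ContDiffOn ℝ (⊤ : ℕ∞) q U) (v w : E) :
    EqOn (D v (D w q)) (D w (D v q)) U := by
  intro z hz
  rw [D_D hU hq hz, D_D hU hq hz]
  exact (smAt hU hq hz).isSymmSndFDerivAt (by simp only [minSmoothness_of_isRCLikeNormedField]; exact WithTop.coe_le_coe.2 (le_top : (2:ℕ∞) ≤ ⊤)) v w

lemma D_congr {U : Set E} (hU : IsOpen U) {p q : E → F} (h : EqOn p q U) (v : E) :
    EqOn (D v p) (D v q) U := by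
  intro z hz
  have : p =ᶠ[𝓝 z] q := Filter.eventuallyEq_of_mem (hU.mem_nhds hz) h
  simp only [D, this.fderiv_eq]

lemma D_sum {κ : Type*} [Fintype κ] {U : Set E} (hU : IsOpen U) {q : κ → E → F}
    (hq : ∀ k, ContDiffOn ℝ (⊤ : ℕ∞) (q k) U) (v : E) :
    EqOn (D v (fun z => ∑ k, q k z)) (fun z => ∑ k, D v (q k) z) U := by
  intro z hz
  simp only [D]
  rw [fderiv_fun_sum (fun k _ => diffAt hU (hq k) hz)]
  simp

lemma D_sub {U : Set E} (hU : IsOpen U) {p q : E → F}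
    (hp : ContDiffOn ℝ (⊤ : ℕ∞) p U) (hq : ContDiffOn ℝ (⊤ : ℕ∞) q U) (v : E) :
    EqOn (D v (fun z => p z - q z)) (fun z => D v p z - D v q z) U := by
  intro z hz
  simp only [D]
  rw [fderiv_fun_sub (diffAt hU hp hz) (diffAt hU hq hz)]
  simp

lemma D_add {U : Set E} (hU : IsOpen U) {p q : E → F}
    (hp : ContDiffOn ℝ (⊤ : ℕ∞) p U) (hq : ContDiffOn ℝ (⊤ : ℕ∞) q U) (v : E) :
    EqOn (D v (fun z => p z + q z)) (fun z => D v p z + D v q z) U := by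
  intro z hz
  simp only [D]
  rw [fderiv_fun_add (diffAt hU hp hz) (diffAt hU hq hz)]
  simp

lemma D_cmul {U : Set E} (hU : IsOpen U) {p : E → ℝ}
    (hp : ContDiffOn ℝ (⊤ : ℕ∞) p U) (a : ℝ) (v : E) :
    EqOn (D v (fun z => a * p z)) (fun z => a * D v p z) U := by
  intro z hz
  simp only [D]
  rw [fderiv_const_mul (diffAt hU hp hz)]
  simp

lemma D_inner {U : Set E} (hU : IsOpen U) {p : E → E}
    (hp : ContDiffOn ℝ (⊤ : ℕ∞) p U) (a : E) (v : E) :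
    EqOn (D v (fun z => ⟪p z, a⟫)) (fun z => ⟪D v p z, a⟫) U := by
  intro z hz
  simp only [D]
  rw [fderiv_inner_apply ℝ (diffAt hU hp hz) (by fun_prop)]
  simp

/-- second order test along a parabola -/
lemma curve_second {U : Set E} (hU : IsOpen U) {q : E → ℝ} (hq : ContDiffOn ℝ (⊤ : ℕ∞) q U)
    {y : E} (hy : y ∈ U) (e m : E) :
    deriv (fun t : ℝ => q (y + t • e + t ^ 2 • m)) 0 = D e q y ∧
    deriv (deriv (fun t : ℝ => q (y + t • e + t ^ 2 • m))) 0 = D e (D e q) y + 2 * D m q y ∧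
    (∀ᶠ t in 𝓝 (0:ℝ), DifferentiableAt ℝ (fun t : ℝ => q (y + t • e + t ^ 2 • m)) t) := by
  have hz : ∀ t : ℝ, HasDerivAt (fun t : ℝ => y + t • e + t ^ 2 • m) (e + (2 * t) • m) t := by
    intro t
    have h1 : HasDerivAt (fun t : ℝ => t • e) ((1:ℝ) • e) t := (hasDerivAt_id t).smul_const e
    have h2 : HasDerivAt (fun t : ℝ => t ^ 2 • m) ((2 * t) • m) t := by
      have := (hasDerivAt_pow 2 t).smul_const m
      simpa using this
    have := (h1.const_add y).fun_add h2
    simpa using this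
  have hc : ContinuousAt (fun t : ℝ => y + t • e + t ^ 2 • m) 0 := (hz 0).continuousAt
  have hev : ∀ᶠ t in 𝓝 (0:ℝ), y + t • e + t ^ 2 • m ∈ U := by
    apply hc.eventually_mem
    simpa using hU.mem_nhds hy
  have hd : ∀ᶠ t in 𝓝 (0:ℝ), HasDerivAt (fun t : ℝ => q (y + t • e + t ^ 2 • m))
      (fderiv ℝ q (y + t • e + t ^ 2 • m) (e + (2 * t) • m)) t := by
    filter_upwards [hev] with t ht
    exact (diffAt hU hq ht).hasFDerivAt.comp_hasDerivAt t (hz t)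
  have hd' : deriv (fun t : ℝ => q (y + t • e + t ^ 2 • m)) =ᶠ[𝓝 0]
      fun t => fderiv ℝ q (y + t • e + t ^ 2 • m) (e + (2 * t) • m) := by
    filter_upwards [hd] with t ht using ht.deriv
  refine ⟨?_, ?_, hd.mono fun t ht => ht.differentiableAt⟩
  · rw [hd'.self_of_nhds]; simp [D]
  · rw [hd'.deriv_eq]
    have hyU : y + (0:ℝ) • e + (0:ℝ) ^ 2 • m ∈ U := by simpa using hy
    have h1 : HasDerivAt (fun t : ℝ => fderiv ℝ q (y + t • e + t ^ 2 • m))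
        (fderiv ℝ (fderiv ℝ q) (y + (0:ℝ) • e + (0:ℝ) ^ 2 • m) (e + (2 * (0:ℝ)) • m)) 0 :=
      HasFDerivAt.comp_hasDerivAt (0:ℝ) (f := fun t : ℝ => y + t • e + t ^ 2 • m)
        (diffAt hU (fderiv_smooth hU hq) hyU).hasFDerivAt (hz 0)
    have h2 : HasDerivAt (fun t : ℝ => e + (2 * t) • m) ((2:ℝ) • m) 0 := by
      have : HasDerivAt (fun t : ℝ => 2 * t) (2 * 1) (0:ℝ) := (hasDerivAt_id (0:ℝ)).const_mul 2
      simpa using (this.smul_const m).const_add e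
    have := (h1.clm_apply h2).deriv
    rw [this, D_D hU hq hy]
    simp [D]

lemma second_nonneg_of_localMin {φ : ℝ → ℝ} (h : IsLocalMin φ 0) (hc : ContinuousAt φ 0) :
    0 ≤ deriv (deriv φ) 0 := by
  by_contra hneg
  push Not at hneg
  have hmax := isLocalMax_of_deriv_deriv_neg hneg h.deriv_eq_zero hc
  have heq : φ =ᶠ[𝓝 0] fun _ => φ 0 := by
    filter_upwards [h, hmax] with t h1 h2 using le_antisymm h2 h1
  have h1 : deriv φ =ᶠ[𝓝 0] fun _ => 0 := by
    have := heq.deriv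
    simpa using this
  rw [h1.deriv_eq] at hneg
  simp at hneg

lemma localMin_second {U : Set E} (hU : IsOpen U) {q : E → ℝ} (hq : ContDiffOn ℝ (⊤ : ℕ∞) q U)
    {y : E} (hy : y ∈ U) (h : IsLocalMin q y) (e : E) : D e q y = 0 ∧ 0 ≤ D e (D e q) y := by
  constructor
  · simp [D, h.fderiv_eq_zero]
  · obtain ⟨-, h2, h3⟩ := curve_second hU hq hy e 0
    have hm : IsLocalMin (fun t : ℝ => q (y + t • e + t ^ 2 • (0:E))) 0 := by
      have hc : ContinuousAt (fun t : ℝ => y + t • e + t ^ 2 • (0:E)) 0 := by fun_prop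
      have h' : ∀ᶠ z in 𝓝 (y + (0:ℝ) • e + (0:ℝ) ^ 2 • (0:E)), q y ≤ q z := by simpa using (show ∀ᶠ z in 𝓝 y, q y ≤ q z from h)
      have := hc.eventually h'
      simpa [IsLocalMin, IsMinFilter] using this
    have := second_nonneg_of_localMin hm h3.self_of_nhds.continuousAt
    rw [h2] at this
    simpa [D] using this

lemma max_principle {κ : Type*} [Fintype κ] {O U : Set E} (hO : IsOpen O) (hU : IsOpen U)
    (hOU : closure O ⊆ U) (hK : IsCompact (closure O)) {Q : E → ℝ}
    (hQ : ContDiffOn ℝ (⊤ : ℕ∞) Q U)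
    (hL : ∀ y ∈ O, ∃ P : κ → E, ∑ k, D (P k) (D (P k) Q) y < 0)
    (hb : ∀ y ∈ frontier O, 0 ≤ Q y) : ∀ y ∈ closure O, 0 ≤ Q y := by
  intro y hy
  obtain ⟨z, hz, hmin⟩ := hK.exists_isMinOn ⟨y, hy⟩ (hQ.continuousOn.mono hOU)
  refine le_trans ?_ (hmin hy)
  by_cases hzO : z ∈ O
  · exfalso
    obtain ⟨P, hP⟩ := hL z hzO
    have hloc : IsLocalMin Q z :=
      (hmin.on_subset subset_closure).isLocalMin (hO.mem_nhds hzO)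
    have : 0 ≤ ∑ k, D (P k) (D (P k) Q) z :=
      Finset.sum_nonneg fun k _ => (localMin_second hU hQ (hOU hz) hloc (P k)).2
    linarith
  · exact hb z ⟨hz, by rwa [hO.interior_eq]⟩

/-- First and second order behaviour at a boundary point. -/
lemma boundary_lemma {U : Set E} (hU : IsOpen U) {h Q : E → ℝ} (hh : ContDiffOn ℝ (⊤ : ℕ∞) h U)
    (hQ : ContDiffOn ℝ (⊤ : ℕ∞) Q U) {y ν : E} (hy : y ∈ U) (h0 : h y = 0) (Q0 : Q y = 0)
    (hν : ∀ v, D v h y = ⟪v, ν⟫) (hν1 : ‖ν‖ = 1) (hpos : ∀ z, 0 < h z → 0 ≤ Q z) :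
    0 ≤ D ν Q y ∧ (∀ v, D v Q y = ⟪v, ν⟫ * D ν Q y) ∧
    (∀ e, ⟪e, ν⟫ = 0 → ∀ K, -D e (D e h) y < 2 * K → 0 ≤ D e (D e Q) y + 2 * K * D ν Q y) := by
  have hνν : ⟪ν, ν⟫ = (1:ℝ) := by rw [real_inner_self_eq_norm_sq, hν1]; norm_num
  have Dlin : ∀ (K : ℝ) (q : E → ℝ), D (K • ν) q y = K * D ν q y := by intro K q; simp [D]
  have key : ∀ e, ⟪e, ν⟫ = 0 → ∀ K, -D e (D e h) y < 2 * K →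
      D e Q y = 0 ∧ 0 ≤ D e (D e Q) y + 2 * K * D ν Q y := by
    intro e he K hK
    obtain ⟨a1, a2, a3⟩ := curve_second hU hh hy e (K • ν)
    obtain ⟨b1, b2, b3⟩ := curve_second hU hQ hy e (K • ν)
    set φ := fun t : ℝ => h (y + t • e + t ^ 2 • (K • ν)) with hφ
    set ψ := fun t : ℝ => Q (y + t • e + t ^ 2 • (K • ν)) with hψ
    rw [Dlin, hν, hνν] at a2
    rw [hν, he] at a1
    have hψ0 : ψ 0 = 0 := by simp [hψ, Q0]
    have hφ0 : φ 0 = 0 := by simp [hφ, h0]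
    have hφpos : ∀ᶠ t in 𝓝 (0:ℝ), t ≠ 0 → 0 < φ t := by
      set δ := (D e (D e h) y + 2 * K) / 4 with hδ
      have hδ0 : 0 < δ := by rw [hδ]; linarith
      have hd2 : DifferentiableAt ℝ (deriv φ) 0 :=
        differentiableAt_of_deriv_ne_zero (by rw [a2]; linarith)
      have hsq : ∀ t : ℝ, HasDerivAt (fun t : ℝ => δ * t ^ 2) (δ * (2 * t)) t := by
        intro t
        simpa using (hasDerivAt_pow 2 t).const_mul δ
      have e1 : deriv (fun t => φ t - δ * t ^ 2) =ᶠ[𝓝 0] fun t => deriv φ t - δ * (2 * t) := by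
        filter_upwards [a3] with t ht
        exact (ht.hasDerivAt.fun_sub (hsq t)).deriv
      have e2 : deriv (deriv (fun t => φ t - δ * t ^ 2)) 0 = deriv (deriv φ) 0 - δ * 2 := by
        rw [e1.deriv_eq]
        have : HasDerivAt (fun t : ℝ => δ * (2 * t)) (δ * (2 * 1)) 0 :=
          ((hasDerivAt_id (0:ℝ)).const_mul 2).const_mul δ
        simpa using (hd2.hasDerivAt.fun_sub this).deriv
      have e3 : IsLocalMin (fun t => φ t - δ * t ^ 2) 0 := by
        apply isLocalMin_of_deriv_deriv_pos
        · rw [e2, a2]; linarith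
        · rw [e1.self_of_nhds]; simp [a1]
        · exact a3.self_of_nhds.continuousAt.sub (by fun_prop)
      filter_upwards [e3] with t ht ht0
      simp only [hφ0] at ht
      have : 0 < δ * t ^ 2 := by positivity
      linarith
    have hmin : IsLocalMin ψ 0 := by
      filter_upwards [hφpos] with t ht
      rw [hψ0]
      by_cases h0 : t = 0
      · rw [h0, hψ0]
      · exact hpos _ (ht h0)
    constructor
    · rw [← b1]; exact hmin.deriv_eq_zero
    · have := second_nonneg_of_localMin hmin b3.self_of_nhds.continuousAt
      rw [b2, Dlin] at this
      linarith
  have hin : 0 ≤ D ν Q y := by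
    have hz : HasDerivAt (fun t : ℝ => y + t • ν) ν 0 := by
      have := ((hasDerivAt_id (0:ℝ)).smul_const ν).const_add y
      simpa using this
    have hs : ∀ q : E → ℝ, ContDiffOn ℝ (⊤ : ℕ∞) q U → q y = 0 →
        Tendsto (fun t : ℝ => t⁻¹ * q (y + t • ν)) (𝓝[>] 0) (𝓝 (D ν q y)) := by
      intro q hq q0
      have hyU : y + (0:ℝ) • ν ∈ U := by simpa using hy
      have h1 : HasDerivAt (fun t : ℝ => q (y + t • ν)) (fderiv ℝ q (y + (0:ℝ) • ν) ν) 0 :=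
        HasFDerivAt.comp_hasDerivAt (0:ℝ) (f := fun t : ℝ => y + t • ν)
          (diffAt hU hq hyU).hasFDerivAt hz
      have := h1.tendsto_slope_zero_right
      simpa [D, q0] using this
    have h1 := hs h hh h0
    rw [hν, hνν] at h1
    have h2 : ∀ᶠ t in 𝓝[>] (0:ℝ), 0 ≤ t⁻¹ * Q (y + t • ν) := by
      filter_upwards [h1.eventually (lt_mem_nhds zero_lt_one), self_mem_nhdsWithin] with t ht ht0
      have ht0 : 0 < t := ht0
      have : 0 < h (y + t • ν) := by
        by_contra hc
        push Not at hc
        have := mul_nonpos_of_nonneg_of_nonpos (inv_pos.2 ht0).le hc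
        linarith
      exact mul_nonneg (inv_pos.2 ht0).le (hpos _ this)
    exact ge_of_tendsto (hs Q hQ Q0) h2
  refine ⟨hin, ?_, fun e he K hK => (key e he K hK).2⟩
  intro v
  have ht : ⟪v - ⟪v, ν⟫ • ν, ν⟫ = (0:ℝ) := by
    rw [inner_sub_left, inner_smul_left, hνν]; simp
  have := (key _ ht (-D (v - ⟪v, ν⟫ • ν) (D (v - ⟪v, ν⟫ • ν) h) y / 2 + 1) (by linarith)).1
  have h2 : D (v - ⟪v, ν⟫ • ν) Q y = D v Q y - ⟪v, ν⟫ * D ν Q y := by simp [D]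
  linarith

end calc1
end LMC
namespace LMC

open Filter Topology Set

section pde

variable {E : Type*} [NormedAddCommGroup E] [InnerProductSpace ℝ E] [CompleteSpace E]
variable {κ : Type*} [Fintype κ]

lemma grad_smooth {U : Set E} (hU : IsOpen U) {f : E → ℝ} (hf : ContDiffOn ℝ (⊤ : ℕ∞) f U) :
    ContDiffOn ℝ (⊤ : ℕ∞) (gradient f) U :=
  (InnerProductSpace.toDual ℝ E).symm.toContinuousLinearEquiv.contDiff.comp_contDiffOn
    (fderiv_smooth hU hf)

lemma grad_inner (f : E → ℝ) (w : E) : (fun z => ⟪gradient f z, w⟫) = D w f := by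
  funext z
  exact inner_gradient_left

lemma A_inner {U : Set E} (hU : IsOpen U) {f : E → ℝ} (hf : ContDiffOn ℝ (⊤ : ℕ∞) f U) {z : E}
    (hz : z ∈ U) (v w : E) : ⟪fderiv ℝ (gradient f) z v, w⟫ = D v (D w f) z := by
  rw [← grad_inner f w]
  exact (D_inner hU (grad_smooth hU hf) w v hz).symm

lemma A_symm {U : Set E} (hU : IsOpen U) {f : E → ℝ} (hf : ContDiffOn ℝ (⊤ : ℕ∞) f U) {z : E}
    (hz : z ∈ U) (v w : E) :
    ⟪fderiv ℝ (gradient f) z v, w⟫ = ⟪v, fderiv ℝ (gradient f) z w⟫ := by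
  rw [A_inner hU hf hz, real_inner_comm, A_inner hU hf hz]
  exact D_comm hU hf v w hz

/-- The dual equation. -/
structure PDE (O U : Set E) (f : E → ℝ) (r : κ → E → E) (c : ℝ) : Prop where
  oO : IsOpen O
  oU : IsOpen U
  sub : closure O ⊆ U
  sm : ContDiffOn ℝ (⊤ : ℕ∞) f U
  rsm : ∀ k, ContDiffOn ℝ (⊤ : ℕ∞) (r k) U
  cpos : 0 < c
  inv : ∀ y ∈ O, ∃ B : E →L[ℝ] E, (∀ v, fderiv ℝ (gradient f) y (B v) = v) ∧
    ∑ k, ⟪r k y, B (r k y)⟫ = c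
  pos : ∀ y ∈ O, ∀ v, ‖v‖ ^ 2 ≤ c * ⟪v, fderiv ℝ (gradient f) y v⟫

lemma PDE.var {O U : Set E} {f : E → ℝ} {r : κ → E → E} {c : ℝ} (H : PDE O U f r c)
    {y : E} (hy : y ∈ O) (P : κ → E) :
    ∑ k, (2 * ⟪r k y, P k⟫ - ⟪P k, fderiv ℝ (gradient f) y (P k)⟫) ≤ c := by
  obtain ⟨B, hB, hc⟩ := H.inv y hy
  rw [← hc]
  apply Finset.sum_le_sum
  intro k _
  have hs := A_symm H.oU H.sm (H.sub (subset_closure hy))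
  have h1 := (sq_nonneg _).trans (H.pos y hy (B (r k y) - P k))
  have h2 : 0 ≤ ⟪B (r k y) - P k, fderiv ℝ (gradient f) y (B (r k y) - P k)⟫ :=
    nonneg_of_mul_nonneg_right h1 H.cpos
  rw [map_sub, hB, inner_sub_left, inner_sub_right, inner_sub_right, ← hs, hB] at h2
  rw [real_inner_comm (P k) (r k y), real_inner_comm (B (r k y)) (r k y)] at *
  linarith

lemma PDE.exists_P {O U : Set E} {f : E → ℝ} {r : κ → E → E} {c : ℝ} (H : PDE O U f r c)
    {y : E} (hy : y ∈ O) :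
    ∃ P : κ → E, (∀ k, fderiv ℝ (gradient f) y (P k) = r k y) ∧ ∑ k, ‖P k‖ ^ 2 ≤ c ^ 2 ∧
      c ^ 2 ≤ (∑ k, ‖r k y‖ ^ 2) * ∑ k, ‖P k‖ ^ 2 ∧
      (∀ e, ∑ k, D (P k) (D (P k) (D e f)) y = ∑ k, 2 * ⟪D e (r k) y, P k⟫) ∧
      (∀ e, ∑ k, 2 * ⟪D e (D e (r k)) y, P k⟫ ≤ ∑ k, D (P k) (D (P k) (D e (D e f))) y) := by
  obtain ⟨B, hB, hc⟩ := H.inv y hy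
  have hyU := H.sub (subset_closure hy)
  refine ⟨fun k => B (r k y), fun k => hB _, ?_, ?_, ?_⟩
  · calc ∑ k, ‖B (r k y)‖ ^ 2 ≤ ∑ k, c * ⟪r k y, B (r k y)⟫ := by
          apply Finset.sum_le_sum
          intro k _
          have := H.pos y hy (B (r k y))
          rwa [hB, real_inner_comm] at this
      _ = c ^ 2 := by rw [← Finset.mul_sum, hc]; ring
  · have h1 : c ≤ ∑ k, ‖r k y‖ * ‖B (r k y)‖ := by
      rw [← hc]
      exact Finset.sum_le_sum fun k _ => real_inner_le_norm _ _
    calc c ^ 2 ≤ (∑ k, ‖r k y‖ * ‖B (r k y)‖) ^ 2 := pow_le_pow_left₀ H.cpos.le h1 2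
      _ ≤ _ := Finset.sum_mul_sq_le_sq_mul_sq _ _ _
  · set P := fun k => B (r k y) with hP
    have hfsm : ∀ k, ContDiffOn ℝ (⊤ : ℕ∞) (D (P k) (D (P k) f)) U := fun k =>
      D_smooth H.oU (D_smooth H.oU H.sm _) _
    have hrsm : ∀ k, ContDiffOn ℝ (⊤ : ℕ∞) (fun z => 2 * ⟪r k z, P k⟫) U := fun k =>
      contDiffOn_const.mul ((H.rsm k).inner ℝ contDiffOn_const)
    set ψ : E → ℝ := fun z => ∑ k, D (P k) (D (P k) f) z - ∑ k, 2 * ⟪r k z, P k⟫ with hψ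
    have hs1 : ContDiffOn ℝ (⊤ : ℕ∞) (fun z => ∑ k, D (P k) (D (P k) f) z) U :=
      ContDiffOn.sum fun k _ => hfsm k
    have hs2 : ContDiffOn ℝ (⊤ : ℕ∞) (fun z => ∑ k, 2 * ⟪r k z, P k⟫) U :=
      ContDiffOn.sum fun k _ => hrsm k
    have hψsm : ContDiffOn ℝ (⊤ : ℕ∞) ψ U := hs1.sub hs2
    have hval : ∀ z ∈ O, ψ z = -∑ k, (2 * ⟪r k z, P k⟫ - ⟪P k, fderiv ℝ (gradient f) z (P k)⟫) := by
      intro z hz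
      simp only [hψ]
      rw [Finset.sum_sub_distrib]
      have : ∀ k, ⟪P k, fderiv ℝ (gradient f) z (P k)⟫ = D (P k) (D (P k) f) z := fun k => by
        rw [real_inner_comm, A_inner H.oU H.sm (H.sub (subset_closure hz))]
      simp only [this]
      ring
    have hψy : ψ y = -c := by
      rw [hval y hy, ← hc]
      congr 1
      apply Finset.sum_congr rfl
      intro k _
      rw [hP]
      simp only [hB]
      rw [real_inner_comm (r k y) (B (r k y))]
      ring
    have hmin : IsLocalMin ψ y := by
      filter_upwards [H.oO.mem_nhds hy] with z hz
      rw [hψy, hval z hz]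
      linarith [H.var hz P]
    have hcomm1 : ∀ e k, EqOn (D e (D (P k) (D (P k) f))) (D (P k) (D (P k) (D e f))) U := by
      intro e k z hz
      rw [D_comm H.oU (D_smooth H.oU H.sm _) _ _ hz]
      exact D_congr H.oU (D_comm H.oU H.sm _ _) _ hz
    have hDψ : ∀ e, EqOn (D e ψ) (fun z => ∑ k, D (P k) (D (P k) (D e f)) z
        - ∑ k, 2 * ⟪D e (r k) z, P k⟫) U := by
      intro e z hz
      rw [hψ, D_sub H.oU hs1 hs2 e hz]
      simp only
      rw [D_sum H.oU hfsm e hz, D_sum H.oU hrsm e hz]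
      simp only
      congr 1
      · exact Finset.sum_congr rfl fun k _ => hcomm1 e k hz
      · apply Finset.sum_congr rfl
        intro k _
        rw [D_cmul H.oU ((H.rsm k).inner ℝ contDiffOn_const) 2 e hz]
        simp only
        rw [D_inner H.oU (H.rsm k) (P k) e hz]
    have hDDψ : ∀ e, D e (D e ψ) y = ∑ k, D (P k) (D (P k) (D e (D e f))) y
        - ∑ k, 2 * ⟪D e (D e (r k)) y, P k⟫ := by
      intro e
      have hfsm' : ∀ k, ContDiffOn ℝ (⊤ : ℕ∞) (D (P k) (D (P k) (D e f))) U := fun k =>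
        D_smooth H.oU (D_smooth H.oU (D_smooth H.oU H.sm _) _) _
      have hrsm' : ∀ k, ContDiffOn ℝ (⊤ : ℕ∞) (fun z => 2 * ⟪D e (r k) z, P k⟫) U := fun k =>
        contDiffOn_const.mul ((D_smooth H.oU (H.rsm k) e).inner ℝ contDiffOn_const)
      rw [D_congr H.oU (hDψ e) e hyU,
        D_sub H.oU (ContDiffOn.sum fun k _ => hfsm' k) (ContDiffOn.sum fun k _ => hrsm' k) e hyU]
      simp only
      rw [D_sum H.oU hfsm' e hyU, D_sum H.oU hrsm' e hyU]
      simp only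
      congr 1
      · apply Finset.sum_congr rfl fun k _ => ?_
        rw [D_comm H.oU (D_smooth H.oU (D_smooth H.oU H.sm _) _) _ _ hyU]
        exact D_congr H.oU (D_comm H.oU (D_smooth H.oU H.sm _) _ _) _ hyU
      · apply Finset.sum_congr rfl
        intro k _
        rw [D_cmul H.oU ((D_smooth H.oU (H.rsm k) e).inner ℝ contDiffOn_const) 2 e hyU]
        simp only
        rw [D_inner H.oU (D_smooth H.oU (H.rsm k) e) (P k) e hyU]
    refine ⟨fun e => ?_, fun e => ?_⟩
    · have := (localMin_second H.oU hψsm hyU hmin e).1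
      rw [hDψ e hyU] at this
      linarith
    · have := (localMin_second H.oU hψsm hyU hmin e).2
      rw [hDDψ e] at this
      linarith

lemma comp_DD {W : Type*} [NormedAddCommGroup W] [NormedSpace ℝ W] {U : Set E} (hU : IsOpen U)
    {γ : E → W} (hγ : ContDiffOn ℝ (⊤ : ℕ∞) γ U) {Φ : W → ℝ} (hΦ : ContDiff ℝ (⊤ : ℕ∞) Φ)
    {y : E} (hy : y ∈ U) (v : E) :
    D v (fun z => Φ (γ z)) y = fderiv ℝ Φ (γ y) (D v γ y) ∧
    D v (D v (fun z => Φ (γ z))) y =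
      fderiv ℝ (fderiv ℝ Φ) (γ y) (D v γ y) (D v γ y) + fderiv ℝ Φ (γ y) (D v (D v γ) y) := by
  have hΦd : Differentiable ℝ Φ := hΦ.differentiable (by simp)
  have hΦ2 : Differentiable ℝ (fderiv ℝ Φ) :=
    (hΦ.fderiv_right (m := (⊤ : ℕ∞)) (by simp)).differentiable (by simp)
  have h1 : EqOn (D v (fun z => Φ (γ z))) (fun z => fderiv ℝ Φ (γ z) (D v γ z)) U := by
    intro z hz
    simp only [D]
    have := fderiv_comp (𝕜 := ℝ) (x := z) (g := Φ) (f := γ) (hΦd _) (diffAt hU hγ hz)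
    rw [show (fun z => Φ (γ z)) = Φ ∘ γ from rfl, this]
    rfl
  refine ⟨h1 hy, ?_⟩
  rw [D_congr hU h1 v hy]
  have h2 : HasFDerivAt (fun z => fderiv ℝ Φ (γ z))
      ((fderiv ℝ (fderiv ℝ Φ) (γ y)).comp (fderiv ℝ γ y)) y :=
    (hΦ2 _).hasFDerivAt.comp y (diffAt hU hγ hy).hasFDerivAt
  have h3 : HasFDerivAt (D v γ) (fderiv ℝ (D v γ) y) y :=
    (diffAt hU (D_smooth hU hγ v) hy).hasFDerivAt
  have := (h2.clm_apply h3).fderiv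
  simp only [D] at this ⊢
  rw [this]
  simp [add_comm]

lemma gam_D {U : Set E} (hU : IsOpen U) {f : E → ℝ} (hf : ContDiffOn ℝ (⊤ : ℕ∞) f U) (e : E) :
    ContDiffOn ℝ (⊤ : ℕ∞) (fun z => (e, z, gradient f z)) U ∧ ∀ y ∈ U, ∀ v,
    D v (fun z => (e, z, gradient f z)) y = (0, v, fderiv ℝ (gradient f) y v) ∧
    D v (D v (fun z => (e, z, gradient f z))) y = (0, 0, D v (D v (gradient f)) y) := by
  have hg := grad_smooth hU hf
  have h1 : ∀ v, EqOn (D v (fun z => (e, z, gradient f z)))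
      (fun z => ((0:E), v, D v (gradient f) z)) U := by
    intro v z hz
    have : HasFDerivAt (fun z => (e, z, gradient f z))
        ((0 : E →L[ℝ] E).prod ((ContinuousLinearMap.id ℝ E).prod (fderiv ℝ (gradient f) z))) z :=
      (hasFDerivAt_const e z).prodMk ((hasFDerivAt_id z).prodMk (diffAt hU hg hz).hasFDerivAt)
    simp [D, this.fderiv]
  refine ⟨contDiffOn_const.prodMk (contDiffOn_id.prodMk hg), fun y hy v => ⟨h1 v hy, ?_⟩⟩
  rw [D_congr hU (h1 v) v hy]
  have : HasFDerivAt (fun z => ((0:E), v, D v (gradient f) z))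
      ((0 : E →L[ℝ] E).prod ((0 : E →L[ℝ] E).prod (fderiv ℝ (D v (gradient f)) y))) y :=
    (hasFDerivAt_const 0 y).prodMk ((hasFDerivAt_const v y).prodMk
      (diffAt hU (D_smooth hU hg v) hy).hasFDerivAt)
  simp only [D] at this ⊢
  rw [this.fderiv]
  simp

lemma compact_bounds {W : Type*} [NormedAddCommGroup W] [NormedSpace ℝ W] {U : Set W}
    (hU : IsOpen U) {V : Type*} [NormedAddCommGroup V] [NormedSpace ℝ V] {Φ : W → V}
    (hΦ : ContDiffOn ℝ (⊤ : ℕ∞) Φ U) {K : Set W} (hK : IsCompact K) (hKU : K ⊆ U) :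
    ∃ M, 0 ≤ M ∧ ∀ p ∈ K, ‖Φ p‖ ≤ M ∧ ‖fderiv ℝ Φ p‖ ≤ M ∧
      (∀ w, ‖fderiv ℝ Φ p w‖ ≤ M * ‖w‖) ∧
      (∀ w, ‖fderiv ℝ (fderiv ℝ Φ) p w w‖ ≤ M * (‖w‖ * ‖w‖)) := by
  have h1 : ContDiffOn ℝ (⊤ : ℕ∞) (fderiv ℝ Φ) U := hΦ.fderiv_of_isOpen hU (by simp)
  have h2 : ContDiffOn ℝ (⊤ : ℕ∞) (fderiv ℝ (fderiv ℝ Φ)) U := h1.fderiv_of_isOpen hU (by simp)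
  obtain ⟨M0, hM0⟩ := hK.exists_bound_of_continuousOn (hΦ.continuousOn.mono hKU)
  obtain ⟨M1, hM1⟩ := hK.exists_bound_of_continuousOn (h1.continuousOn.mono hKU)
  obtain ⟨M2, hM2⟩ := IsCompact.exists_bound_of_continuousOn (E := W →L[ℝ] W →L[ℝ] V) hK
    (h2.continuousOn.mono hKU)
  have a0 := le_abs_self M0
  have a1 := le_abs_self M1
  have a2 := le_abs_self M2
  have b0 := abs_nonneg M0
  have b1 := abs_nonneg M1
  have b2 := abs_nonneg M2
  refine ⟨|M0| + |M1| + |M2|, by positivity, fun p hp => ?_⟩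
  refine ⟨by linarith [hM0 p hp], by linarith [hM1 p hp], fun w => ?_, fun w => ?_⟩
  · refine ((fderiv ℝ Φ p).le_opNorm w).trans ?_
    gcongr
    linarith [hM1 p hp]
  · refine ((fderiv ℝ (fderiv ℝ Φ) p).le_opNorm₂ w w).trans ?_
    rw [mul_assoc]
    gcongr
    linarith [hM2 p hp]

/-- Bound for the linearized operator on `Φ(e, y, ∇f)`. -/
lemma Phi_bound {O U : Set E} {f : E → ℝ} {r : κ → E → E} {c : ℝ} (H : PDE O U f r c)
    {Φ : E × E × E → ℝ} (hΦ : ContDiff ℝ (⊤ : ℕ∞) Φ) {y : E} (hy : y ∈ O) (e : E)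
    {M1 M2 R T : ℝ} (hM1 : ∀ w, |fderiv ℝ Φ (e, y, gradient f y) w| ≤ M1 * ‖w‖)
    (hM2 : ∀ w, |fderiv ℝ (fderiv ℝ Φ) (e, y, gradient f y) w w| ≤ M2 * (‖w‖ * ‖w‖))
    (hM1' : 0 ≤ M1) (hM2' : 0 ≤ M2)
    (hr : ∀ k, ‖r k y‖ ≤ R) (hr1 : ∀ k, ‖fderiv ℝ (r k) y‖ ≤ R) (hc : c ≤ T)
    {P : κ → E} (hP : ∀ k, fderiv ℝ (gradient f) y (P k) = r k y)
    (hPc : ∑ k, ‖P k‖ ^ 2 ≤ c ^ 2)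
    (hPe : ∀ e, ∑ k, D (P k) (D (P k) (D e f)) y = ∑ k, 2 * ⟪D e (r k) y, P k⟫) (hR : 0 ≤ R) :
    |∑ k, D (P k) (D (P k) (fun z => Φ (e, z, gradient f z))) y| ≤
      ∑ _k : κ, M2 * ((T + R) * (T + R)) + M1 * ∑ _k : κ, 2 * (R * T) := by
  have hyU := H.sub (subset_closure hy)
  have hT : 0 ≤ T := H.cpos.le.trans hc
  have hPk : ∀ k, ‖P k‖ ≤ T := by
    intro k
    have h1 : ‖P k‖ ^ 2 ≤ c ^ 2 :=
      (Finset.single_le_sum (f := fun k => ‖P k‖ ^ 2) (fun k _ => sq_nonneg _)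
        (Finset.mem_univ k)).trans hPc
    exact ((sq_le_sq₀ (norm_nonneg _) H.cpos.le).1 h1).trans hc
  obtain ⟨hγ, hγ'⟩ := gam_D H.oU H.sm e
  have h1 : ∑ k, D (P k) (D (P k) (fun z => Φ (e, z, gradient f z))) y =
      ∑ k, fderiv ℝ (fderiv ℝ Φ) (e, y, gradient f y) (0, P k, r k y) (0, P k, r k y) +
      fderiv ℝ Φ (e, y, gradient f y) (0, 0, ∑ k, D (P k) (D (P k) (gradient f)) y) := by
    have : ((0:E), (0:E), ∑ k, D (P k) (D (P k) (gradient f)) y) =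
        ∑ k, ((0:E), (0:E), D (P k) (D (P k) (gradient f)) y) := by
      ext <;> simp [Prod.fst_sum, Prod.snd_sum]
    rw [this, map_sum, ← Finset.sum_add_distrib]
    apply Finset.sum_congr rfl
    intro k _
    rw [(comp_DD H.oU hγ hΦ hyU (P k)).2, (hγ' y hyU (P k)).1, (hγ' y hyU (P k)).2, hP]
  set X := ∑ k, D (P k) (D (P k) (gradient f)) y with hX
  have hXn : ‖X‖ ≤ ∑ _k : κ, 2 * (R * T) := by
    have h2 : ∀ w, ⟪X, w⟫ = ∑ k, 2 * ⟪D w (r k) y, P k⟫ := by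
      intro w
      rw [← hPe w, hX, sum_inner]
      apply Finset.sum_congr rfl
      intro k _
      rw [← grad_inner f w]
      have g1 := D_inner H.oU (grad_smooth H.oU H.sm) w (P k)
      rw [D_congr H.oU g1 (P k) hyU]
      exact (D_inner H.oU (D_smooth H.oU (grad_smooth H.oU H.sm) (P k)) w (P k) hyU).symm
    have h3 : ‖X‖ * ‖X‖ ≤ (∑ _k : κ, 2 * (R * T)) * ‖X‖ := by
      rw [← real_inner_self_eq_norm_mul_norm, h2 X, Finset.sum_mul]
      apply Finset.sum_le_sum
      intro k _
      have a1 : ⟪D X (r k) y, P k⟫ ≤ ‖D X (r k) y‖ * ‖P k‖ := real_inner_le_norm _ _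
      have a2 : ‖D X (r k) y‖ ≤ R * ‖X‖ :=
        ((fderiv ℝ (r k) y).le_opNorm X).trans (by gcongr; exact hr1 k)
      have a3 : ‖D X (r k) y‖ * ‖P k‖ ≤ (R * ‖X‖) * T := by
        gcongr; exact hPk k
      nlinarith
    rcases (norm_nonneg X).eq_or_lt with h0 | h0
    · rw [← h0]; positivity
    · exact le_of_mul_le_mul_right h3 h0
  rw [h1]
  refine (abs_add_le _ _).trans (add_le_add ?_ ?_)
  · refine (Finset.abs_sum_le_sum_abs _ _).trans (Finset.sum_le_sum fun k _ => ?_)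
    have hn : ‖((0:E), P k, r k y)‖ ≤ T + R := by
      simp only [Prod.norm_mk, norm_zero]
      refine max_le (by positivity) (max_le ?_ ?_)
      · linarith [hPk k]
      · linarith [hr k]
    refine (hM2 _).trans ?_
    gcongr
  · refine (hM1 _).trans ?_
    have : ‖((0:E), (0:E), X)‖ = ‖X‖ := by simp [Prod.norm_mk]
    rw [this]
    gcongr

end pde
end LMC
namespace LMC

open Filter Topology Set

section core

variable {E : Type*} [NormedAddCommGroup E] [InnerProductSpace ℝ E] [CompleteSpace E]
variable {κ : Type*} [Fintype κ]

/-- admissible frames for the linearized operator -/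
def Adm (f : E → ℝ) (r : κ → E → E) (c : ℝ) (y : E) (P : κ → E) : Prop :=
  (∀ k, fderiv ℝ (gradient f) y (P k) = r k y) ∧ ∑ k, ‖P k‖ ^ 2 ≤ c ^ 2 ∧
      c ^ 2 ≤ (∑ k, ‖r k y‖ ^ 2) * ∑ k, ‖P k‖ ^ 2 ∧
      (∀ e, ∑ k, D (P k) (D (P k) (D e f)) y = ∑ k, 2 * ⟪D e (r k) y, P k⟫) ∧
      (∀ e, ∑ k, 2 * ⟪D e (D e (r k)) y, P k⟫ ≤ ∑ k, D (P k) (D (P k) (D e (D e f))) y)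

lemma barrier {O U : Set E} {f : E → ℝ} {r : κ → E → E} {c : ℝ} (H : PDE O U f r c)
    (hK : IsCompact (closure O)) {h : E → ℝ} (hh : ContDiff ℝ (⊤ : ℕ∞) h) {θ S c0 : ℝ}
    (hθ : 0 < θ) (hS : 0 < S) (hc0 : 0 < c0)
    (hess : ∀ y v, D v (D v h) y ≤ -θ * ‖v‖ ^ 2) (h0 : ∀ y ∈ frontier O, h y = 0)
    (hrS : ∀ y ∈ O, ∑ k, ‖r k y‖ ^ 2 ≤ S) (hc : c0 ≤ c)
    {q : E → ℝ} (hq : ContDiffOn ℝ (⊤ : ℕ∞) q U) {Kq : ℝ}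
    (hqL : ∀ y ∈ O, ∀ P, Adm f r c y P → -Kq ≤ ∑ k, D (P k) (D (P k) q) y)
    (hqb : ∀ y ∈ frontier O, q y ≤ 0) (hKq : 0 ≤ Kq) :
    ∀ y ∈ closure O, q y ≤ (Kq / (θ * (c0 ^ 2 / S)) + 1) * h y := by
  have hε : 0 < θ * (c0 ^ 2 / S) := by positivity
  set ε := θ * (c0 ^ 2 / S) with hεd
  set a := Kq / ε + 1 with ha
  have ha0 : 0 ≤ a := by positivity
  have haε : a * ε = Kq + ε := by rw [ha]; field_simp
  have hhU : ContDiffOn ℝ (⊤ : ℕ∞) h U := hh.contDiffOn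
  have hahU : ContDiffOn ℝ (⊤ : ℕ∞) (fun z => a * h z) U := contDiffOn_const.mul hhU
  have := max_principle (κ := κ) H.oO H.oU H.sub hK (Q := fun z => a * h z - q z) (hahU.sub hq) ?_ ?_
  · intro y hy
    have := this y hy
    linarith
  · intro y hy
    obtain ⟨P, hP⟩ := H.exists_P hy
    have hA : Adm f r c y P := hP
    refine ⟨P, ?_⟩
    have hyU := H.sub (subset_closure hy)
    have h1 : ∀ k, D (P k) (D (P k) (fun z => a * h z - q z)) y =
        a * D (P k) (D (P k) h) y - D (P k) (D (P k) q) y := by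
      intro k
      have e1 : EqOn (D (P k) (fun z => a * h z - q z)) (fun z => a * D (P k) h z - D (P k) q z) U := by
        intro z hz
        rw [D_sub H.oU hahU hq _ hz]
        simp only
        rw [D_cmul H.oU hhU _ _ hz]
      rw [D_congr H.oU e1 _ hyU, D_sub H.oU (contDiffOn_const.mul (D_smooth H.oU hhU _))
        (D_smooth H.oU hq _) _ hyU]
      simp only
      rw [D_cmul H.oU (D_smooth H.oU hhU _) _ _ hyU]
    simp only [h1]
    rw [Finset.sum_sub_distrib, ← Finset.mul_sum]
    have h2 := hqL y hy P hA
    have h3 : ∑ k, D (P k) (D (P k) h) y ≤ -θ * ∑ k, ‖P k‖ ^ 2 := by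
      rw [Finset.mul_sum]
      exact Finset.sum_le_sum fun k _ => hess y (P k)
    have h4 : c0 ^ 2 / S ≤ ∑ k, ‖P k‖ ^ 2 := by
      rw [div_le_iff₀ hS]
      have g1 : c0 ^ 2 ≤ c ^ 2 := pow_le_pow_left₀ hc0.le hc 2
      have g2 := hA.2.2.1
      have g3 : (∑ k, ‖r k y‖ ^ 2) * ∑ k, ‖P k‖ ^ 2 ≤ S * ∑ k, ‖P k‖ ^ 2 :=
        mul_le_mul_of_nonneg_right (hrS y hy) (Finset.sum_nonneg fun k _ => sq_nonneg _)
      linarith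
    have h5 : ∑ k, D (P k) (D (P k) h) y ≤ -ε := by
      have := mul_le_mul_of_nonneg_left h4 hθ.le
      rw [hεd]; linarith
    have h6 := mul_le_mul_of_nonneg_left h5 ha0
    linarith
  · intro y hy
    simp only [h0 y hy]
    linarith [hqb y hy]

lemma DD_grad {g : E → ℝ} (hg : ContDiff ℝ (⊤ : ℕ∞) g) (y v w : E) :
    ⟪w, fderiv ℝ (gradient g) y v⟫ = D v (D w g) y := by
  rw [real_inner_comm]
  exact A_inner isOpen_univ hg.contDiffOn (mem_univ y) v w

lemma G_deriv {U : Set E} (hU : IsOpen U) {f g : E → ℝ} (hf : ContDiffOn ℝ (⊤ : ℕ∞) f U)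
    (hg : ContDiff ℝ (⊤ : ℕ∞) g) {y : E} (hy : y ∈ U) (v : E) :
    D v (fun z => g (gradient f z)) y =
      ⟪gradient g (gradient f y), fderiv ℝ (gradient f) y v⟫ ∧
    D v (D v (fun z => g (gradient f z))) y =
      ⟪fderiv ℝ (gradient f) y v,
        fderiv ℝ (gradient g) (gradient f y) (fderiv ℝ (gradient f) y v)⟫ +
      D (gradient g (gradient f y)) (D v (D v f)) y := by
  have hgf := grad_smooth hU hf
  obtain ⟨h1, h2⟩ := comp_DD hU hgf hg hy v
  have hin : ∀ w, fderiv ℝ g (gradient f y) w = ⟪gradient g (gradient f y), w⟫ := fun w =>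
    (inner_gradient_left).symm
  refine ⟨by rw [h1, hin]; rfl, ?_⟩
  rw [h2, hin, DD_grad hg, D_D isOpen_univ hg.contDiffOn (mem_univ _)]
  congr 1
  set β := gradient g (gradient f y)
  rw [D_comm hU (D_smooth hU hf v) β v hy, D_congr hU (D_comm hU hf β v) v hy, ← grad_inner f β,
    D_congr hU (D_inner hU hgf β v) v hy, D_inner hU (D_smooth hU hgf v) β v hy, real_inner_comm]

lemma bdry_facts {O U : Set E} {f : E → ℝ} {r : κ → E → E} {c : ℝ} (H : PDE O U f r c)
    {g h : E → ℝ} (hg : ContDiff ℝ (⊤ : ℕ∞) g) (hh : ContDiff ℝ (⊤ : ℕ∞) h)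
    (hO : O = {p | 0 < h p}) {CG : ℝ} {y : E} (hy : y ∈ frontier O) (h0 : h y = 0)
    (hν : ‖gradient h y‖ = 1) (hβ : ‖gradient g (gradient f y)‖ = 1)
    (hgpos : ∀ z ∈ O, 0 ≤ g (gradient f z)) (hg0 : g (gradient f y) = 0)
    (hGh : ∀ z ∈ O, g (gradient f z) ≤ CG * h z) :
    ∃ μ, 0 ≤ μ ∧ μ ≤ CG ∧
      fderiv ℝ (gradient f) y (gradient g (gradient f y)) = μ • gradient h y ∧
      1 ≤ c * (μ * ⟪gradient g (gradient f y), gradient h y⟫) ∧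
      ∀ e, ⟪e, gradient h y⟫ = 0 → ∀ K, -D e (D e h) y < 2 * K →
        0 ≤ D e (D e (fun z => g (gradient f z))) y + 2 * K * μ := by
  have hyc : y ∈ closure O := hy.1
  have hyU := H.sub hyc
  set ν := gradient h y with hνd
  set β := gradient g (gradient f y) with hβd
  have hhU : ContDiffOn ℝ (⊤ : ℕ∞) h U := hh.contDiffOn
  have hGU : ContDiffOn ℝ (⊤ : ℕ∞) (fun z => g (gradient f z)) U :=
    hg.comp_contDiffOn (grad_smooth H.oU H.sm)
  have hDh : ∀ v, D v h y = ⟪v, ν⟫ := by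
    intro v; rw [real_inner_comm]; exact (inner_gradient_left).symm
  obtain ⟨a1, a2, a3⟩ := boundary_lemma H.oU hhU hGU hyU h0 hg0 hDh hν
    (fun z hz => hgpos z (by rw [hO]; exact hz))
  have hQU : ContDiffOn ℝ (⊤ : ℕ∞) (fun z => CG * h z) U := contDiffOn_const.mul hhU
  obtain ⟨b1, -, -⟩ := boundary_lemma H.oU hhU (hQU.sub hGU) hyU h0 (by simp [h0, hg0]) hDh hν
    (fun z hz => by have := hGh z (by rw [hO]; exact hz); linarith)
  have b1' : 0 ≤ D ν (fun z => CG * h z - g (gradient f z)) y := b1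
  rw [D_sub H.oU hQU hGU _ hyU] at b1'
  simp only at b1'
  rw [D_cmul H.oU hhU _ _ hyU] at b1'
  simp only at b1'
  rw [hDh, real_inner_self_eq_norm_sq, hν] at b1'
  set μ := D ν (fun z => g (gradient f z)) y with hμ
  have hAβ : fderiv ℝ (gradient f) y β = μ • ν := by
    apply ext_inner_right ℝ
    intro v
    rw [A_symm H.oU H.sm hyU, ← (G_deriv H.oU H.sm hg hyU v).1, a2, inner_smul_left, real_inner_comm]
    simp [mul_comm]
  refine ⟨μ, a1, by linarith, hAβ, ?_, a3⟩
  -- positivity on the closure by continuity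
  have hcont : ContinuousOn (fun z => c * ⟪β, fderiv ℝ (gradient f) z β⟫) U := by
    have : ContinuousOn (fun z => fderiv ℝ (gradient f) z β) U :=
      (D_smooth H.oU (grad_smooth H.oU H.sm) β).continuousOn
    exact continuousOn_const.mul (continuousOn_const.inner this)
  have hcl : ‖β‖ ^ 2 ≤ c * ⟪β, fderiv ℝ (gradient f) y β⟫ := by
    have hct : ContinuousWithinAt (fun z => c * ⟪β, fderiv ℝ (gradient f) z β⟫) O y :=
      (hcont y hyU).mono (subset_closure.trans H.sub)
    have : (𝓝[O] y).NeBot := mem_closure_iff_nhdsWithin_neBot.1 hyc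
    refine ge_of_tendsto hct ?_
    filter_upwards [self_mem_nhdsWithin] with z hz using H.pos z hz β
  rw [hβ, hAβ, inner_smul_right] at hcl
  simpa using hcl

end core
end LMC
namespace LMC

open Filter Topology Set

section core

variable {E : Type*} [NormedAddCommGroup E] [InnerProductSpace ℝ E] [CompleteSpace E]
variable {κ : Type*} [Fintype κ]

lemma exists_chi {σ : ℝ} (hσ : 0 < σ) :
    ∃ χ : ℝ → ℝ, ContDiff ℝ (⊤ : ℕ∞) χ ∧ ∀ d, σ ≤ d → χ d = 1 / d := by
  refine ⟨fun d => Real.smoothTransition (2 * d / σ - 1) / d, ?_, ?_⟩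
  · rw [contDiff_iff_contDiffAt]
    intro d
    by_cases hd : d = 0
    · subst hd
      have : (fun d : ℝ => Real.smoothTransition (2 * d / σ - 1) / d) =ᶠ[𝓝 0] fun _ => 0 := by
        have h1 : Iio (σ / 2) ∈ 𝓝 (0:ℝ) := Iio_mem_nhds (by positivity)
        filter_upwards [h1] with t ht
        rw [Real.smoothTransition.zero_of_nonpos, zero_div]
        have : 2 * t / σ ≤ 1 := by
          rw [div_le_one hσ]; have := mem_Iio.1 ht; linarith
        linarith
      exact contDiffAt_const.congr_of_eventuallyEq this
    · have h1 : ContDiff ℝ (⊤ : ℕ∞) (fun d : ℝ => Real.smoothTransition (2 * d / σ - 1)) :=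
        Real.smoothTransition.contDiff.comp (by fun_prop)
      exact h1.contDiffAt.div contDiffAt_id hd
  · intro d hd
    simp only
    rw [Real.smoothTransition.one_of_one_le]
    have : 1 ≤ d / σ := by rw [le_div_iff₀ hσ]; linarith
    have h2 : 2 * d / σ = 2 * (d / σ) := by ring
    linarith

lemma frontier_alg (A : E →L[ℝ] E) (hA : ∀ v w, ⟪A v, w⟫ = ⟪v, A w⟫) {β ν e : E} {σ μ CG M : ℝ}
    (hσ : 0 < σ) (hd : σ ≤ ⟪β, ν⟫) (hAβ : A β = μ • ν) (h0μ : 0 ≤ μ) (hμ : μ ≤ CG)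
    (hβ : ‖β‖ = 1) (hν : ‖ν‖ = 1) (he : ‖e‖ = 1) (hM1 : 1 ≤ M)
    (hM : ∀ s : E, ‖s‖ = 1 → ⟪s, ν⟫ = 0 → ⟪s, A s⟫ ≤ M) :
    ⟪e, A e⟫ - M + M * (2 * (⟪e, ν⟫ * ⟪e, β⟫) * (1 / ⟪β, ν⟫) - (1 + CG) / σ ^ 2 * ⟪e, ν⟫ ^ 2) ≤ 0 := by
  set d := ⟪β, ν⟫ with hdd
  have hd0 : 0 < d := hσ.trans_le hd
  set k := ⟪e, ν⟫ / d with hk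
  set τ := e - k • β with hτ
  have hM' : ∀ s : E, ⟪s, ν⟫ = 0 → ⟪s, A s⟫ ≤ M * ‖s‖ ^ 2 := by
    intro s hs
    by_cases h : s = 0
    · simp [h]
    · have hn : 0 < ‖s‖ := norm_pos_iff.2 h
      have := hM (‖s‖⁻¹ • s) (by rw [norm_smul]; simp [hn.ne']) (by rw [inner_smul_left, hs]; simp)
      rw [map_smul, inner_smul_left, inner_smul_right] at this
      simp only [conj_trivial] at this
      rw [← mul_assoc] at this
      have h3 : ‖s‖⁻¹ * ‖s‖⁻¹ = (‖s‖ ^ 2)⁻¹ := by rw [sq, mul_inv]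
      rw [h3, inv_mul_le_iff₀ (by positivity)] at this
      linarith
  have h1 : ⟪τ, ν⟫ = 0 := by
    rw [hτ, inner_sub_left, inner_smul_left, ← hdd, hk]
    simp only [conj_trivial]
    field_simp
    ring
  have h2 := hM' τ h1
  have h3 : ‖τ‖ ^ 2 = 1 - 2 * (k * ⟪e, β⟫) + k ^ 2 := by
    rw [hτ, @norm_sub_sq ℝ, inner_smul_right, norm_smul, he, hβ]
    simp
  have hek : ⟪e, ν⟫ = k * d := by rw [hk]; field_simp
  have h4 : ⟪τ, A τ⟫ = ⟪e, A e⟫ - k ^ 2 * (μ * d) := by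
    rw [hτ, map_sub, map_smul, inner_sub_left, inner_sub_right, inner_sub_right, hAβ,
      inner_smul_left, inner_smul_left, inner_smul_right, inner_smul_right, inner_smul_right,
      inner_smul_right, ← hA β e, hAβ, inner_smul_left, real_inner_comm e ν, ← hdd, hek]
    simp only [conj_trivial]
    ring
  have hd1 : d ≤ 1 := by
    have := real_inner_le_norm β ν
    rwa [hβ, hν, one_mul] at this
  have h5 : μ * d ≤ CG := by nlinarith
  have h6 : k ^ 2 * (μ * d) ≤ k ^ 2 * CG := mul_le_mul_of_nonneg_left h5 (sq_nonneg _)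
  have h7 : k ^ 2 ≤ ⟪e, ν⟫ ^ 2 / σ ^ 2 := by
    rw [le_div_iff₀ (by positivity), hek, mul_pow]
    exact mul_le_mul_of_nonneg_left (pow_le_pow_left₀ hσ.le hd 2) (sq_nonneg _)
  have hCG : 0 ≤ CG := h0μ.trans hμ
  have h8 : k ^ 2 * (M + CG) ≤ k ^ 2 * (M * (1 + CG)) :=
    mul_le_mul_of_nonneg_left (by nlinarith) (sq_nonneg _)
  have h9 : k ^ 2 * (M * (1 + CG)) ≤ ⟪e, ν⟫ ^ 2 / σ ^ 2 * (M * (1 + CG)) :=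
    mul_le_mul_of_nonneg_right h7 (by positivity)
  have h10 : 2 * (⟪e, ν⟫ * ⟪e, β⟫) * (1 / d) = 2 * (k * ⟪e, β⟫) := by
    rw [hk]; field_simp
  have h11 : (1 + CG) / σ ^ 2 * ⟪e, ν⟫ ^ 2 * M = ⟪e, ν⟫ ^ 2 / σ ^ 2 * (M * (1 + CG)) := by ring
  rw [h10]
  rw [h3, h4] at h2
  linarith

lemma L_w {O U : Set E} {f : E → ℝ} {r : κ → E → E} {c : ℝ} (H : PDE O U f r c)
    {q : E → ℝ} (hq : ContDiffOn ℝ (⊤ : ℕ∞) q U) {y : E} (hy : y ∈ O) {e : E} (he : ‖e‖ = 1)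
    {m R T Bd : ℝ} (hm : 0 ≤ m) (hR : 0 ≤ R) (hc : c ≤ T)
    (hr2 : ∀ k w, ‖fderiv ℝ (fderiv ℝ (r k)) y w w‖ ≤ R * (‖w‖ * ‖w‖))
    {P : κ → E} (hP : Adm f r c y P) (hB : |∑ k, D (P k) (D (P k) q) y| ≤ Bd) :
    -(∑ _k : κ, 2 * (R * T) + m * Bd) ≤
      ∑ k, D (P k) (D (P k) (fun z => D e (D e f) z - (m - m * q z))) y := by
  have hyU := H.sub (subset_closure hy)
  have hF : ContDiffOn ℝ (⊤ : ℕ∞) (D e (D e f)) U := D_smooth H.oU (D_smooth H.oU H.sm _) _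
  have hmq : ContDiffOn ℝ (⊤ : ℕ∞) (fun z => m - m * q z) U :=
    contDiffOn_const.sub (contDiffOn_const.mul hq)
  have e0 : ∀ v : E, EqOn (D v (fun z => m - m * q z)) (fun z => -m * D v q z) U := by
    intro v z hz
    have := D_sub H.oU (p := fun _ => m) contDiffOn_const (contDiffOn_const.mul hq (f := fun _ => m)) v hz
    rw [this]
    simp only
    rw [D_cmul H.oU hq m v hz]
    simp [D]
  have e1 : ∀ k, D (P k) (D (P k) (fun z => D e (D e f) z - (m - m * q z))) y =
      D (P k) (D (P k) (D e (D e f))) y + m * D (P k) (D (P k) q) y := by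
    intro k
    have g1 : EqOn (D (P k) (fun z => D e (D e f) z - (m - m * q z)))
        (fun z => D (P k) (D e (D e f)) z - (-m * D (P k) q z)) U := by
      intro z hz
      rw [D_sub H.oU hF hmq _ hz]
      simp only
      rw [e0 _ hz]
    rw [D_congr H.oU g1 _ hyU, D_sub H.oU (D_smooth H.oU hF _)
      (contDiffOn_const.mul (D_smooth H.oU hq _)) _ hyU]
    simp only
    rw [D_cmul H.oU (D_smooth H.oU hq _) _ _ hyU]
    ring
  simp only [e1]
  rw [Finset.sum_add_distrib, ← Finset.mul_sum Finset.univ (fun k => D (P k) (D (P k) q) y) m]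
  have h1 := hP.2.2.2.2 e
  have hT : 0 ≤ T := H.cpos.le.trans hc
  have hPk : ∀ k, ‖P k‖ ≤ T := by
    intro k
    have h1 : ‖P k‖ ^ 2 ≤ c ^ 2 :=
      (Finset.single_le_sum (f := fun k => ‖P k‖ ^ 2) (fun k _ => sq_nonneg _)
        (Finset.mem_univ k)).trans hP.2.1
    exact ((sq_le_sq₀ (norm_nonneg _) H.cpos.le).1 h1).trans hc
  have h2 : -∑ _k : κ, 2 * (R * T) ≤ ∑ k, 2 * ⟪D e (D e (r k)) y, P k⟫ := by
    rw [← Finset.sum_neg_distrib]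
    apply Finset.sum_le_sum
    intro k _
    have a1 := abs_real_inner_le_norm (D e (D e (r k)) y) (P k)
    have a2 : ‖D e (D e (r k)) y‖ ≤ R := by
      rw [D_D H.oU (H.rsm k) hyU]
      simpa [he] using hr2 k e
    have a3 : ‖D e (D e (r k)) y‖ * ‖P k‖ ≤ R * T := by gcongr; exact hPk k
    have := neg_le_of_abs_le (a1.trans a3)
    linarith
  have h3 := mul_le_mul_of_nonneg_left (neg_le_of_abs_le hB) hm
  linarith

/-- the auxiliary function -/
def Phi2 (g h : E → ℝ) (χ : ℝ → ℝ) (C : ℝ) (p : E × E × E) : ℝ :=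
  2 * (⟪p.1, gradient h p.2.1⟫ * ⟪p.1, gradient g p.2.2⟫) *
    χ ⟪gradient g p.2.2, gradient h p.2.1⟫ - C * ⟪p.1, gradient h p.2.1⟫ ^ 2

lemma Phi2_smooth {g h : E → ℝ} (hg : ContDiff ℝ (⊤ : ℕ∞) g) (hh : ContDiff ℝ (⊤ : ℕ∞) h)
    {χ : ℝ → ℝ} (hχ : ContDiff ℝ (⊤ : ℕ∞) χ) (C : ℝ) :
    ContDiff ℝ (⊤ : ℕ∞) (Phi2 g h χ C) := by
  have h1 : ContDiff ℝ (⊤ : ℕ∞) (gradient g) :=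
    contDiffOn_univ.1 (grad_smooth isOpen_univ hg.contDiffOn)
  have h2 : ContDiff ℝ (⊤ : ℕ∞) (gradient h) :=
    contDiffOn_univ.1 (grad_smooth isOpen_univ hh.contDiffOn)
  have g1 : ContDiff ℝ (⊤ : ℕ∞) (fun p : E × E × E => gradient g p.2.2) :=
    h1.comp (contDiff_snd.comp contDiff_snd)
  have g2 : ContDiff ℝ (⊤ : ℕ∞) (fun p : E × E × E => gradient h p.2.1) :=
    h2.comp (contDiff_fst.comp contDiff_snd)
  have g3 : ContDiff ℝ (⊤ : ℕ∞) (fun p : E × E × E => p.1) := contDiff_fst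
  have a1 := g3.inner ℝ g2
  have a2 := g3.inner ℝ g1
  have a3 := hχ.comp (g1.inner ℝ g2)
  exact ((contDiff_const.mul (a1.mul a2)).mul a3).sub (contDiff_const.mul (a1.pow 2))

end core
end LMC
namespace LMC

open Filter Topology Set

section core

variable {E : Type*} [NormedAddCommGroup E] [InnerProductSpace ℝ E] [CompleteSpace E]
  [ProperSpace E]
variable {κ : Type*} [Fintype κ]

lemma r_bounds {V K : Set E} (hV : IsOpen V) (hK : IsCompact K) (hKV : K ⊆ V) {r : κ → E → E}
    (hr : ∀ k, ContDiffOn ℝ (⊤ : ℕ∞) (r k) V) :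
    ∃ R, 0 ≤ R ∧ ∀ y ∈ K, (∀ k, ‖r k y‖ ≤ R) ∧ (∀ k, ‖fderiv ℝ (r k) y‖ ≤ R) ∧
      ∀ k w, ‖fderiv ℝ (fderiv ℝ (r k)) y w w‖ ≤ R * (‖w‖ * ‖w‖) := by
  choose Rk h0 h1 using fun k => compact_bounds hV (hr k) hK hKV
  have hle : ∀ k, Rk k ≤ ∑ k, Rk k := fun k =>
    Finset.single_le_sum (f := Rk) (fun k _ => h0 k) (Finset.mem_univ k)
  refine ⟨∑ k, Rk k, Finset.sum_nonneg fun k _ => h0 k, fun y hy => ⟨?_, ?_, ?_⟩⟩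
  · exact fun k => (h1 k y hy).1.trans (hle k)
  · exact fun k => (h1 k y hy).2.1.trans (hle k)
  · intro k w
    refine ((h1 k y hy).2.2.2 w).trans ?_
    have := hle k
    gcongr

set_option maxHeartbeats 4000000 in
theorem core_est {O Ω V : Set E} {g h : E → ℝ} {θ1 θ2 c0 c2 : ℝ} {r : κ → E → E}
    (hOc : IsCompact (closure O)) (hΩc : IsCompact (closure Ω))
    (hV : IsOpen V) (hOV : closure O ⊆ V) (hr : ∀ k, ContDiffOn ℝ (⊤ : ℕ∞) (r k) V)
    (hg : ContDiff ℝ (⊤ : ℕ∞) g) (hh : ContDiff ℝ (⊤ : ℕ∞) h)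
    (hθ1 : 0 < θ1) (hθ2 : 0 < θ2) (hc0 : 0 < c0) (hc2 : 0 < c2)
    (hessg : ∀ p ξ, ⟪ξ, fderiv ℝ (gradient g) p ξ⟫ ≤ -θ1 * ‖ξ‖ ^ 2)
    (hessh : ∀ p ξ, ⟪ξ, fderiv ℝ (gradient h) p ξ⟫ ≤ -θ2 * ‖ξ‖ ^ 2)
    (hO : O = {p | 0 < h p}) (hO0 : ∀ y ∈ frontier O, h y = 0)
    (hν : ∀ y ∈ frontier O, ‖gradient h y‖ = 1) (hβ : ∀ x ∈ frontier Ω, ‖gradient g x‖ = 1) :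
    ∃ C, 0 < C ∧ ∀ (U : Set E) (f : E → ℝ) (c : ℝ), PDE O U f r c → c0 ≤ c → c ≤ c2 →
      (∀ y ∈ closure O, gradient f y ∈ closure Ω) → (∀ y ∈ O, 0 ≤ g (gradient f y)) →
      (∀ y ∈ frontier O, gradient f y ∈ frontier Ω ∧ g (gradient f y) = 0) →
      ∀ y ∈ frontier O, ∀ s, ‖s‖ = 1 → ⟪s, gradient h y⟫ = 0 →
        ⟪s, fderiv ℝ (gradient f) y s⟫ ≤ C := by
  obtain ⟨R, hR, hRb⟩ := r_bounds hV hOc hOV hr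
  set S : ℝ := ∑ _k : κ, R ^ 2 + 1 with hS
  have hS0 : 0 < S := by positivity
  have hrS : ∀ y ∈ O, ∑ k, ‖r k y‖ ^ 2 ≤ S := by
    intro y hy
    have : ∑ k, ‖r k y‖ ^ 2 ≤ ∑ _k : κ, R ^ 2 := Finset.sum_le_sum fun k _ =>
      pow_le_pow_left₀ (norm_nonneg _) ((hRb y (subset_closure hy)).1 k) 2
    linarith
  have hhess' : ∀ y v, D v (D v h) y ≤ -θ2 * ‖v‖ ^ 2 := fun y v => by
    rw [← DD_grad hh]; exact hessh y v
  have hε : 0 < θ2 * (c0 ^ 2 / S) := by positivity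
  set ε := θ2 * (c0 ^ 2 / S) with hεd
  let K : Set (E × E × E) := Metric.closedBall (0:E) 1 ×ˢ (closure O ×ˢ closure Ω)
  have hK : IsCompact K := (isCompact_closedBall 0 1).prod (hOc.prod hΩc)
  -- first barrier
  have hΦ1 : ContDiff ℝ (⊤ : ℕ∞) (fun p : E × E × E => g p.2.2) :=
    hg.comp (contDiff_snd.comp contDiff_snd)
  obtain ⟨Mg, hMg0, hMg⟩ := compact_bounds isOpen_univ hΦ1.contDiffOn hK (subset_univ _)
  obtain ⟨Mh, hMh0, hMh⟩ := compact_bounds isOpen_univ hh.contDiffOn hOc (subset_univ _)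
  let Bd : ℝ → ℝ := fun M => ∑ _k : κ, M * ((c2 + R) * (c2 + R)) + M * ∑ _k : κ, 2 * (R * c2)
  have hBd : ∀ M, 0 ≤ M → 0 ≤ Bd M := fun M hM => by
    simp only [Bd]; positivity
  set CG : ℝ := Bd Mg / ε + 1 with hCG
  have hCG1 : 1 ≤ CG := by
    have : 0 ≤ Bd Mg / ε := div_nonneg (hBd _ hMg0) hε.le
    linarith
  set σ : ℝ := 1 / (CG * c2) with hσd
  have hσ : 0 < σ := by positivity
  obtain ⟨χ, hχ, hχ1⟩ := exists_chi hσ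
  have hΦ2 := Phi2_smooth hg hh hχ ((1 + CG) / σ ^ 2)
  set Φ := Phi2 g h χ ((1 + CG) / σ ^ 2) with hΦd
  obtain ⟨MΦ, hMΦ0, hMΦ⟩ := compact_bounds isOpen_univ hΦ2.contDiffOn hK (subset_univ _)
  set N : ℝ := ∑ _k : κ, 2 * (R * c2) + Bd MΦ with hN
  have hN0 : 0 ≤ N := by
    have := hBd MΦ hMΦ0
    positivity
  set C' : ℝ := N / ε + 1 with hC'
  have hC'0 : 0 ≤ C' := by positivity
  set X : ℝ := 2 * (Mh + 1) * CG + C' + MΦ * (1 + CG) with hX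
  have hX0 : 0 ≤ X := by positivity
  refine ⟨1 + X / θ1, by positivity, ?_⟩
  intro U f c H hcl hcu hmaps hgpos hfr y1 hy1 s1 hs1 hs1t
  -- barrier for G
  have hGU : ContDiffOn ℝ (⊤ : ℕ∞) (fun z => g (gradient f z)) U :=
    hg.comp_contDiffOn (grad_smooth H.oU H.sm)
  have hmemK : ∀ e : E, ‖e‖ = 1 → ∀ y ∈ closure O, ((e, y, gradient f y) : E × E × E) ∈ K := by
    intro e he y hy
    exact ⟨by simp [he], hy, hmaps y hy⟩
  have hPB : ∀ (Ψ : E × E × E → ℝ) (hΨ : ContDiff ℝ (⊤ : ℕ∞) Ψ) (M : ℝ), 0 ≤ M →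
      (∀ p ∈ K, ‖Ψ p‖ ≤ M ∧ ‖fderiv ℝ Ψ p‖ ≤ M ∧ (∀ w, ‖fderiv ℝ Ψ p w‖ ≤ M * ‖w‖) ∧
      (∀ w, ‖fderiv ℝ (fderiv ℝ Ψ) p w w‖ ≤ M * (‖w‖ * ‖w‖))) →
      ∀ e : E, ‖e‖ = 1 → ∀ y ∈ O, ∀ P, Adm f r c y P →
      |∑ k, D (P k) (D (P k) (fun z => Ψ (e, z, gradient f z))) y| ≤ Bd M := by
    intro Ψ hΨ M hM0 hM e he y hy P hP
    have hyc := subset_closure hy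
    have hk := hM _ (hmemK e he y hyc)
    exact Phi_bound H hΨ hy e hk.2.2.1 hk.2.2.2 hM0 hM0 (hRb y hyc).1 (hRb y hyc).2.1 hcu hP.1
      hP.2.1 hP.2.2.2.1 hR
  have hGh : ∀ z ∈ closure O, g (gradient f z) ≤ CG * h z := by
    refine barrier H hOc hh hθ2 hS0 hc0 hhess' hO0 hrS hcl hGU ?_ (fun y hy => (hfr y hy).2.le)
      (hBd Mg hMg0)
    intro y hy P hP
    exact neg_le_of_abs_le (hPB _ hΦ1 Mg hMg0 hMg s1 hs1 y hy P hP)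
  -- maximum
  let Z : Set (E × E) := {p | p.1 ∈ frontier O ∧ ‖p.2‖ = 1 ∧ ⟪p.2, gradient h p.1⟫ = 0}
  have hgradh : Continuous (gradient h) :=
    (contDiffOn_univ.1 (grad_smooth isOpen_univ hh.contDiffOn)).continuous
  have hfc : IsCompact (frontier O) := hOc.of_isClosed_subset isClosed_frontier frontier_subset_closure
  have hZ : IsCompact Z := by
    have h1 : IsClosed {p : E × E | ⟪p.2, gradient h p.1⟫ = 0} :=
      isClosed_eq (continuous_snd.inner (hgradh.comp continuous_fst)) continuous_const
    have h2 := (hfc.prod (isCompact_sphere (0:E) 1)).inter_right h1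
    convert h2 using 1
    ext p
    simp [Z, and_assoc]
  have hcontA : ContinuousOn (fun p : E × E => ⟪p.2, fderiv ℝ (gradient f) p.1 p.2⟫) Z := by
    have h1 : ContinuousOn (fderiv ℝ (gradient f)) U :=
      (fderiv_smooth H.oU (grad_smooth H.oU H.sm)).continuousOn
    have h2 : ContinuousOn (fun p : E × E => fderiv ℝ (gradient f) p.1) Z :=
      h1.comp continuousOn_fst fun p hp => H.sub hp.1.1
    exact continuousOn_snd.inner (h2.clm_apply continuousOn_snd)
  obtain ⟨⟨y0, e⟩, ⟨hy0, he, het⟩, hmax⟩ := hZ.exists_isMaxOn ⟨(y1, s1), hy1, hs1, hs1t⟩ hcontA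
  simp only at hy0 he het
  set M := ⟪e, fderiv ℝ (gradient f) y0 e⟫ with hMd
  have hMmax : ∀ y ∈ frontier O, ∀ s, ‖s‖ = 1 → ⟪s, gradient h y⟫ = 0 →
      ⟪s, fderiv ℝ (gradient f) y s⟫ ≤ M := by
    intro y hy s hs hst
    exact hmax (show (y, s) ∈ Z from ⟨hy, hs, hst⟩)
  refine (hMmax y1 hy1 s1 hs1 hs1t).trans ?_
  by_cases hM1 : M < 1
  · have : 0 ≤ X / θ1 := by positivity
    linarith
  push Not at hM1
  have hbf := fun y hy => bdry_facts H hg hh hO (CG := CG) hy (hO0 y hy) (hν y hy)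
    (hβ _ (hfr y hy).1) hgpos (hfr y hy).2 (fun z hz => hGh z (subset_closure hz))
  have hd : ∀ y ∈ frontier O, σ ≤ ⟪gradient g (gradient f y), gradient h y⟫ := by
    intro y hy
    obtain ⟨μ, m0, m1, -, m2, -⟩ := hbf y hy
    set d := ⟪gradient g (gradient f y), gradient h y⟫
    have hd0 : 0 ≤ d := by
      by_contra hneg
      push Not at hneg
      have := mul_nonpos_of_nonneg_of_nonpos m0 hneg.le
      nlinarith [H.cpos]
    rw [hσd, div_le_iff₀ (by positivity)]
    have a1 : μ * d ≤ CG * d := mul_le_mul_of_nonneg_right m1 hd0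
    have a2 : c * (μ * d) ≤ c2 * (CG * d) :=
      mul_le_mul hcu a1 (by positivity) hc2.le
    linarith
  -- w
  have hγ := (gam_D H.oU H.sm e).1
  set q : E → ℝ := fun z => Φ (e, z, gradient f z) with hq
  have hqU : ContDiffOn ℝ (⊤ : ℕ∞) q U := hΦ2.comp_contDiffOn hγ
  have hFU : ContDiffOn ℝ (⊤ : ℕ∞) (D e (D e f)) U := D_smooth H.oU (D_smooth H.oU H.sm _) _
  have hmqU : ContDiffOn ℝ (⊤ : ℕ∞) (fun z => M - M * q z) U :=
    contDiffOn_const.sub (contDiffOn_const.mul hqU)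
  set w : E → ℝ := fun z => D e (D e f) z - (M - M * q z) with hw
  have hwU : ContDiffOn ℝ (⊤ : ℕ∞) w U := hFU.sub hmqU
  have hM0 : 0 ≤ M := by linarith
  have hAee : ∀ y ∈ U, D e (D e f) y = ⟪e, fderiv ℝ (gradient f) y e⟫ := by
    intro y hy
    rw [real_inner_comm, A_inner H.oU H.sm hy]
  have hwb : ∀ y ∈ frontier O, w y ≤ 0 := by
    intro y hy
    have hyU := H.sub hy.1
    obtain ⟨μ, m0, m1, mA, -, -⟩ := hbf y hy
    have := frontier_alg (fderiv ℝ (gradient f) y) (A_symm H.oU H.sm hyU) hσ (hd y hy) mA m0 m1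
      (hβ _ (hfr y hy).1) (hν y hy) he hM1 (hMmax y hy)
    have h2 : q y = 2 * (⟪e, gradient h y⟫ * ⟪e, gradient g (gradient f y)⟫) *
        (1 / ⟪gradient g (gradient f y), gradient h y⟫) - (1 + CG) / σ ^ 2 * ⟪e, gradient h y⟫ ^ 2 := by
      simp only [hq, hΦd, Phi2]
      rw [hχ1 _ (hd y hy)]
    simp only [hw]
    rw [hAee y hyU, h2]
    linarith
  have hwy0 : w y0 = 0 := by
    simp only [hw, hAee y0 (H.sub hy0.1), hq, hΦd, Phi2, het]
    rw [← hMd]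
    ring
  set Kq : ℝ := ∑ _k : κ, 2 * (R * c2) + M * Bd MΦ with hKq
  have hKq0 : 0 ≤ Kq := by
    have := hBd MΦ hMΦ0
    positivity
  set a : ℝ := Kq / ε + 1 with ha
  have haC : a ≤ C' * M := by
    have h1 : Kq ≤ N * M := by
      have : 0 ≤ ∑ _k : κ, 2 * (R * c2) := by positivity
      rw [hKq, hN]
      nlinarith
    have h2 : Kq / ε ≤ N * M / ε := by gcongr
    rw [ha, hC']
    have : (N / ε + 1) * M = N * M / ε + M := by ring
    linarith
  have hwh : ∀ z ∈ closure O, w z ≤ a * h z := by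
    refine barrier H hOc hh hθ2 hS0 hc0 hhess' hO0 hrS hcl hwU ?_ hwb hKq0
    intro y hy P hP
    exact L_w H hqU hy he hM0 hR hcu (hRb y (subset_closure hy)).2.2 hP
      (hPB _ hΦ2 MΦ hMΦ0 hMΦ e he y hy P hP)
  -- boundary derivative
  have hyU := H.sub hy0.1
  have hhU : ContDiffOn ℝ (⊤ : ℕ∞) h U := hh.contDiffOn
  have hahU : ContDiffOn ℝ (⊤ : ℕ∞) (fun z => a * h z) U := contDiffOn_const.mul hhU
  set ν := gradient h y0 with hνd
  set β := gradient g (gradient f y0) with hβd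
  have hDh : ∀ v, D v h y0 = ⟪v, ν⟫ := by
    intro v; rw [real_inner_comm]; exact (inner_gradient_left).symm
  have hβ1 : ‖β‖ = 1 := hβ _ (hfr y0 hy0).1
  have hν1 : ‖ν‖ = 1 := hν _ hy0
  have hdβ : 0 ≤ ⟪β, ν⟫ := hσ.le.trans (hd y0 hy0)
  have hdβ1 : ⟪β, ν⟫ ≤ 1 := by
    have := real_inner_le_norm β ν
    rwa [hβ1, hν1, one_mul] at this
  obtain ⟨b1, b2, -⟩ := boundary_lemma H.oU hhU (Q := fun z => a * h z - w z) (hahU.sub hwU) hyU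
    (hO0 y0 hy0) (by simp [hO0 y0 hy0, hwy0]) hDh hν1
    (fun z hz => by
      have := hwh z (subset_closure (by rw [hO]; exact hz))
      linarith)
  have b3 : 0 ≤ D β (fun z => a * h z - w z) y0 := by
    rw [b2]; exact mul_nonneg hdβ b1
  obtain ⟨μ, m0, m1, mA, -, m3⟩ := hbf y0 hy0
  have hDq : |D β q y0| ≤ MΦ * (1 + CG) := by
    rw [hq, (comp_DD H.oU hγ hΦ2 hyU β).1, ((gam_D H.oU H.sm e).2 y0 hyU β).1, mA]
    refine ((hMΦ _ (hmemK e he y0 hy0.1)).2.2.1 _).trans ?_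
    gcongr
    simp only [Prod.norm_mk, norm_zero]
    refine max_le (by positivity) (max_le ?_ ?_)
    · linarith [hβ1]
    · rw [norm_smul, hν1, Real.norm_of_nonneg m0]; linarith
  have b4 : D β (fun z => a * h z - w z) y0 =
      a * ⟪β, ν⟫ - (D β (D e (D e f)) y0 + M * D β q y0) := by
    rw [D_sub H.oU hahU hwU β hyU]
    simp only
    rw [D_cmul H.oU hhU _ _ hyU, hw, D_sub H.oU hFU hmqU β hyU]
    simp only
    rw [hDh]
    have e0 : D β (fun z => M - M * q z) y0 = -(M * D β q y0) := by
      have := D_sub H.oU (p := fun _ => M) contDiffOn_const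
        (contDiffOn_const.mul hqU (f := fun _ => M)) β hyU
      rw [this]
      simp only
      rw [D_cmul H.oU hqU M β hyU]
      simp [D]
    rw [e0]
    ring
  rw [b4] at b3
  have ha0 : 0 ≤ a := by positivity
  have b5 : D β (D e (D e f)) y0 ≤ C' * M + M * (MΦ * (1 + CG)) := by
    have i1 : a * ⟪β, ν⟫ ≤ a := mul_le_of_le_one_right ha0 hdβ1
    have i2 := mul_le_mul_of_nonneg_left (neg_le_of_abs_le hDq) hM0
    linarith
  -- second derivative of G
  have hG2 := m3 e het (Mh + 1) (by
    have := (hMh y0 hy0.1).2.2.2 e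
    rw [he, ← D_D isOpen_univ hh.contDiffOn (mem_univ y0), Real.norm_eq_abs] at this
    have := neg_le_of_abs_le this
    linarith)
  rw [(G_deriv H.oU H.sm hg hyU e).2] at hG2
  have hg2 := hessg (gradient f y0) (fderiv ℝ (gradient f) y0 e)
  have hAe : M ≤ ‖fderiv ℝ (gradient f) y0 e‖ := by
    have := real_inner_le_norm e (fderiv ℝ (gradient f) y0 e)
    rwa [he, one_mul] at this
  have hAe2 : M ^ 2 ≤ ‖fderiv ℝ (gradient f) y0 e‖ ^ 2 := pow_le_pow_left₀ hM0 hAe 2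
  have k1 : 2 * (Mh + 1) * μ ≤ 2 * (Mh + 1) * CG := by gcongr
  have k2 := mul_le_mul_of_nonneg_left hAe2 hθ1.le
  have k3 : θ1 * M ^ 2 ≤ 2 * (Mh + 1) * CG + (C' * M + M * (MΦ * (1 + CG))) := by linarith
  have k4 : 2 * (Mh + 1) * CG ≤ 2 * (Mh + 1) * CG * M := le_mul_of_one_le_right (by positivity) hM1
  have k5 : θ1 * M * M ≤ X * M := by rw [hX]; linarith
  have k6 : θ1 * M ≤ X := le_of_mul_le_mul_right k5 (by linarith)
  have : M ≤ X / θ1 := by rw [le_div_iff₀ hθ1]; linarith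
  linarith

end core
end LMC
namespace LMC

open Filter Topology Set

section bounds

variable {E : Type*} [NormedAddCommGroup E] [InnerProductSpace ℝ E] [CompleteSpace E]
  [ProperSpace E]

lemma norm_gradient (f : E → ℝ) (x : E) : ‖gradient f x‖ = ‖fderiv ℝ f x‖ := by
  simp [gradient]

lemma interior_hess {U : Set E} (hU : IsOpen U) {f : E → ℝ} (hf : ContDiffOn ℝ (⊤ : ℕ∞) f U)
    {x0 : E} {ρ L K : ℝ} (hρ : 0 < ρ) (hball : Metric.closedBall x0 ρ ⊆ U)
    (hL : ∀ x ∈ Metric.closedBall x0 ρ, ‖gradient f x‖ ≤ L) (hK : 2 * L < K * ρ) :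
    ∃ x ∈ Metric.ball x0 ρ, ∀ e, ⟪e, fderiv ℝ (gradient f) x e⟫ ≤ K * ‖e‖ ^ 2 := by
  set p : E → ℝ := fun z => K / 2 * ‖z - x0‖ ^ 2 with hp
  have hpU : ContDiffOn ℝ (⊤ : ℕ∞) p U :=
    (contDiff_const.mul ((contDiff_id.sub contDiff_const).norm_sq ℝ)).contDiffOn
  set q : E → ℝ := fun z => p z - f z with hq
  have hqU : ContDiffOn ℝ (⊤ : ℕ∞) q U := hpU.sub hf
  obtain ⟨x, hx, hmin⟩ := (isCompact_closedBall x0 ρ).exists_isMinOn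
    ⟨x0, Metric.mem_closedBall_self hρ.le⟩ (hqU.continuousOn.mono hball)
  have hxb : x ∈ Metric.ball x0 ρ := by
    by_contra hnb
    have hdist : ‖x - x0‖ = ρ := by
      rw [Metric.mem_ball, not_lt, dist_eq_norm] at hnb
      rw [Metric.mem_closedBall, dist_eq_norm] at hx
      exact le_antisymm hx hnb
    have h1 : q x ≤ q x0 := hmin (Metric.mem_closedBall_self hρ.le)
    have h2 : ‖f x - f x0‖ ≤ L * ‖x - x0‖ :=
      (convex_closedBall x0 ρ).norm_image_sub_le_of_norm_fderiv_le (𝕜 := ℝ)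
        (fun z hz => diffAt hU hf (hball hz))
        (fun z hz => by rw [← norm_gradient]; exact hL z hz)
        (Metric.mem_closedBall_self hρ.le) hx
    have h3 := (le_abs_self _).trans h2
    simp only [hq, hp, sub_self, norm_zero] at h1
    rw [hdist] at h1 h3
    nlinarith
  refine ⟨x, hxb, fun e => ?_⟩
  have hxU := hball hx
  have hloc : IsLocalMin q x := hmin.isLocalMin (Metric.closedBall_mem_nhds_of_mem hxb)
  have h2 := (localMin_second hU hqU hxU hloc e).2
  have e1 : EqOn (D e p) (fun z => K * ⟪z - x0, e⟫) U := by
    intro z _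
    have h := ((hasFDerivAt_id (𝕜 := ℝ) z).sub_const x0).norm_sq.const_mul (K / 2)
    have h' : HasFDerivAt p _ z := h
    simp only [D]
    rw [h'.fderiv]
    simp [inner_sub_left]
    ring
  have e2 : D e (D e p) x = K * ‖e‖ ^ 2 := by
    rw [D_congr hU e1 e hxU]
    have hs : ContDiffOn ℝ (⊤ : ℕ∞) (fun z : E => z - x0) U :=
      (contDiff_id.sub contDiff_const).contDiffOn
    rw [D_cmul hU (hs.inner ℝ contDiffOn_const) K e hxU]
    simp only
    rw [D_inner hU hs e e hxU]
    have : D e (fun z : E => z - x0) x = e := by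
      simp [D, fderiv_sub_const]
    simp only [this, real_inner_self_eq_norm_sq]
  have e3 : D e (D e q) x = D e (D e p) x - D e (D e f) x := by
    rw [D_congr hU (D_sub hU hpU hf e) e hxU, D_sub hU (D_smooth hU hpU e) (D_smooth hU hf e) e hxU]
  rw [e3, e2] at h2
  rw [real_inner_comm, A_inner hU hf hxU]
  linarith

lemma psd_cs (B : E →L[ℝ] E) (hB : ∀ v w, ⟪B v, w⟫ = ⟪v, B w⟫) (hp : ∀ v, 0 ≤ ⟪v, B v⟫) (a w : E) :
    ⟪a, B w⟫ ^ 2 ≤ ⟪a, B a⟫ * ⟪w, B w⟫ := by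
  have h : ∀ t : ℝ, 0 ≤ ⟪w, B w⟫ * (t * t) + (2 * ⟪a, B w⟫) * t + ⟪a, B a⟫ := by
    intro t
    have h1 := hp (a + t • w)
    rw [map_add, map_smul, inner_add_left, inner_add_right, inner_add_right, inner_smul_left,
      inner_smul_right, inner_smul_left, inner_smul_right, ← hB w a, real_inner_comm a (B w)] at h1
    simp only [conj_trivial] at h1
    linarith
  have := discrim_le_zero h
  rw [discrim] at this
  linarith

end bounds

section red

variable {n : ℕ}

/-- frames -/
def rr (n : ℕ) (k : Option (Fin n)) (p : EuclideanSpace ℝ (Fin n)) : EuclideanSpace ℝ (Fin n) :=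
  match k with
  | some i => (1 / Real.sqrt (Real.sqrt (1 - ‖p‖ ^ 2))) • ev n i
  | none => (1 / (Real.sqrt (Real.sqrt (1 - ‖p‖ ^ 2)) * Real.sqrt (1 - ‖p‖ ^ 2))) • p

lemma one_sub_pos {p : EuclideanSpace ℝ (Fin n)} (hp : ‖p‖ < 1) : 0 < 1 - ‖p‖ ^ 2 := by
  have := norm_nonneg p
  nlinarith

lemma rr_smooth (k : Option (Fin n)) :
    ContDiffOn ℝ (⊤ : ℕ∞) (rr n k) (Metric.ball (0 : EuclideanSpace ℝ (Fin n)) 1) := by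
  intro p hp
  have hp1 : 0 < 1 - ‖p‖ ^ 2 := one_sub_pos (by simpa using hp)
  have h0 : ContDiffAt ℝ (⊤ : ℕ∞) (fun p : EuclideanSpace ℝ (Fin n) => 1 - ‖p‖ ^ 2) p :=
    contDiffAt_const.sub (contDiffAt_id.norm_sq ℝ)
  have h1 := h0.sqrt hp1.ne'
  have hv := Real.sqrt_pos.2 hp1
  have h2 := h1.sqrt hv.ne'
  have hs := Real.sqrt_pos.2 hv
  apply ContDiffAt.contDiffWithinAt
  cases k with
  | some i => exact (contDiffAt_const.div h2 hs.ne').smul contDiffAt_const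
  | none => exact (contDiffAt_const.div (h2.mul h1) (by positivity)).smul contDiffAt_id

lemma ev_norm (i : Fin n) : ‖ev n i‖ = 1 := by simp [ev]

lemma inner_ev (p : EuclideanSpace ℝ (Fin n)) (i : Fin n) : ⟪p, ev n i⟫ = p i := by
  simp [ev, EuclideanSpace.inner_single_right]

lemma sum_ev (p : EuclideanSpace ℝ (Fin n)) : ∑ i, ⟪p, ev n i⟫ • ev n i = p := by
  have := (EuclideanSpace.basisFun (Fin n) ℝ).sum_repr p
  simp only [inner_ev]
  simpa [ev] using this

lemma norm_sq_ev (p : EuclideanSpace ℝ (Fin n)) : ‖p‖ ^ 2 = ∑ i, ⟪ev n i, p⟫ ^ 2 := by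
  rw [EuclideanSpace.real_norm_sq_eq]
  simp [real_inner_comm p, inner_ev]

lemma sum_rr (B : EuclideanSpace ℝ (Fin n) →L[ℝ] EuclideanSpace ℝ (Fin n))
    {p : EuclideanSpace ℝ (Fin n)} (hp : ‖p‖ < 1) :
    ∑ k, ⟪rr n k p, B (rr n k p)⟫ =
      (∑ i, ⟪ev n i, B (ev n i)⟫) / Real.sqrt (1 - ‖p‖ ^ 2) +
        ⟪p, B p⟫ / Real.sqrt (1 - ‖p‖ ^ 2) ^ 3 := by
  have hv := Real.sqrt_pos.2 (one_sub_pos hp)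
  set v := Real.sqrt (1 - ‖p‖ ^ 2) with hvd
  have hs := Real.sq_sqrt hv.le
  have hs0 := Real.sqrt_pos.2 hv
  set s := Real.sqrt v with hsd
  rw [Fintype.sum_option, add_comm, Finset.sum_div]
  simp only [rr, map_smul, inner_smul_left, inner_smul_right, conj_trivial, ← hvd, ← hsd]
  congr 1
  · apply Finset.sum_congr rfl
    intro i _
    rw [← hs]; field_simp
  · have : v ^ 3 = (s * v) * (s * v) := by rw [← hs]; ring
    rw [this]; field_simp

lemma MOp_eq {U : Set (EuclideanSpace ℝ (Fin n))} (hU : IsOpen U)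
    {u : EuclideanSpace ℝ (Fin n) → ℝ} (hu : ContDiffOn ℝ (⊤ : ℕ∞) u U)
    {x : EuclideanSpace ℝ (Fin n)} (hx : x ∈ U) (hx1 : ‖gradient u x‖ < 1) :
    MOp n u x = ∑ k, ⟪rr n k (gradient u x), fderiv ℝ (gradient u) x (rr n k (gradient u x))⟫ := by
  rw [sum_rr _ hx1]
  have hpos := one_sub_pos hx1
  have hv := Real.sqrt_pos.2 hpos
  set B := fderiv ℝ (gradient u) x with hB
  set p := gradient u x with hp
  have hG : HasFDerivAt (gradient u) B x := (diffAt hU (grad_smooth hU hu) hx).hasFDerivAt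
  have hV : HasFDerivAt (fun y => Real.sqrt (1 - ‖gradient u y‖ ^ 2)) _ x :=
    (hG.norm_sq.const_sub 1).sqrt hpos.ne'
  have key : ∀ i, fderiv ℝ (fun y => fderiv ℝ u y (ev n i) / Real.sqrt (1 - ‖gradient u y‖ ^ 2)) x
      (ev n i) = ⟪ev n i, B (ev n i)⟫ / Real.sqrt (1 - ‖p‖ ^ 2) +
        ⟪p, ev n i⟫ * ⟪p, B (ev n i)⟫ / Real.sqrt (1 - ‖p‖ ^ 2) ^ 3 := by
    intro i
    have e1 : (fun y => fderiv ℝ u y (ev n i)) = fun y => ⟪gradient u y, ev n i⟫ :=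
      (grad_inner u (ev n i)).symm
    have hN := hG.inner ℝ (hasFDerivAt_const (ev n i) x)
    rw [← e1] at hN
    have hI := (hasDerivAt_inv hv.ne').comp_hasFDerivAt x hV
    have hd : HasFDerivAt (fun y => fderiv ℝ u y (ev n i) / Real.sqrt (1 - ‖gradient u y‖ ^ 2)) _ x :=
      HasFDerivAt.mul hN hI
    rw [hd.fderiv]
    have e2 : fderiv ℝ u x (ev n i) = ⟪p, ev n i⟫ := congrFun e1 x
    rw [← hp]
    simp only [e2]
    set v := Real.sqrt (1 - ‖p‖ ^ 2)
    simp [fderivInnerCLM_apply, real_inner_comm (B (ev n i)) (ev n i)]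
    field_simp
    ring
  unfold MOp
  rw [Finset.sum_congr rfl fun i _ => key i, Finset.sum_add_distrib, ← Finset.sum_div, ← Finset.sum_div]
  have e3 : B p = ∑ i, ⟪p, ev n i⟫ • B (ev n i) := by
    conv_lhs => rw [← sum_ev p, map_sum]
    simp only [map_smul]
  rw [e3, inner_sum]
  simp only [inner_smul_right]

end red
end LMC
namespace LMC

open Filter Topology Set

section final

variable {n : ℕ}

lemma sol_PDE (hn : 2 ≤ n) {Ω Ω' : Set (EuclideanSpace ℝ (Fin n))}
    (hΩo : IsOpen Ω) (hΩ'o : IsOpen Ω') (hne : Ω.Nonempty)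
    (hsub : closure Ω' ⊆ Metric.ball (0 : EuclideanSpace ℝ (Fin n)) 1)
    {u ut : EuclideanSpace ℝ (Fin n) → ℝ} {c : ℝ}
    (hu : IsSol n Ω Ω' u c) (hut : IsLegendre n Ω Ω' u ut) :
    ∃ U, U ⊆ Metric.ball (0 : EuclideanSpace ℝ (Fin n)) 1 ∧ PDE Ω' U ut (rr n) c := by
  obtain ⟨⟨W, hWo, hW, husm⟩, hu1, hupos, hbij, hM⟩ := hu
  obtain ⟨⟨W', hW'o, hW', hutsm⟩, -, hgr⟩ := hut
  have hB1 : ∀ x ∈ Ω, ∑ i, ⟪ev n i, fderiv ℝ (gradient u) x (ev n i)⟫ ≤ c := by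
    intro x hx
    have hxW := hW (subset_closure hx)
    have hx1 := hu1 x (subset_closure hx)
    have hpsd : ∀ ξ, 0 ≤ ⟪ξ, fderiv ℝ (gradient u) x ξ⟫ := by
      intro ξ
      by_cases h : ξ = 0
      · simp [h]
      · exact (hupos x (subset_closure hx) ξ h).le
    rw [← hM x hx, MOp_eq hWo husm hxW hx1, sum_rr _ hx1]
    have hv := Real.sqrt_pos.2 (one_sub_pos hx1)
    have hv1 : Real.sqrt (1 - ‖gradient u x‖ ^ 2) ≤ 1 := by
      refine Real.sqrt_le_iff.2 ⟨by norm_num, ?_⟩; nlinarith [sq_nonneg ‖gradient u x‖]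
    have h1 : 0 ≤ ∑ i, ⟪ev n i, fderiv ℝ (gradient u) x (ev n i)⟫ :=
      Finset.sum_nonneg fun i _ => hpsd _
    have h2 := le_div_self h1 hv hv1
    have h3 : 0 ≤ ⟪gradient u x, fderiv ℝ (gradient u) x (gradient u x)⟫ /
      Real.sqrt (1 - ‖gradient u x‖ ^ 2) ^ 3 := div_nonneg (hpsd _) (by positivity)
    linarith
  have hAB : ∀ x ∈ Ω, ∀ v, fderiv ℝ (gradient ut) (gradient u x) (fderiv ℝ (gradient u) x v) = v := by
    intro x hx v
    have hxW := hW (subset_closure hx)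
    have hyW := hW' (subset_closure (hbij.mapsTo hx))
    have h1 : HasFDerivAt (gradient ut ∘ gradient u) _ x :=
      (diffAt hW'o (grad_smooth hW'o hutsm) hyW).hasFDerivAt.comp x
        (diffAt hWo (grad_smooth hWo husm) hxW).hasFDerivAt
    have h2 : gradient ut ∘ gradient u =ᶠ[𝓝 x] id := by
      filter_upwards [hΩo.mem_nhds hx] with z hz using hgr z hz
    have h3 := h1.unique ((hasFDerivAt_id x).congr_of_eventuallyEq h2)
    exact DFunLike.congr_fun h3 v
  refine ⟨W' ∩ Metric.ball 0 1, inter_subset_right, ?_⟩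
  refine ⟨hΩ'o, hW'o.inter Metric.isOpen_ball, subset_inter hW' hsub,
    hutsm.mono inter_subset_left, fun k => (rr_smooth k).mono inter_subset_right, ?_, ?_, ?_⟩
  · obtain ⟨x, hx⟩ := hne
    refine lt_of_lt_of_le ?_ (hB1 x hx)
    have : Nonempty (Fin n) := ⟨⟨0, by omega⟩⟩
    refine Finset.sum_pos (fun i _ => hupos x (subset_closure hx) _ ?_) Finset.univ_nonempty
    rw [← norm_ne_zero_iff, ev_norm]; exact one_ne_zero
  · intro y hy
    obtain ⟨x, hx, rfl⟩ := hbij.surjOn hy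
    refine ⟨fderiv ℝ (gradient u) x, hAB x hx, ?_⟩
    rw [← hM x hx, MOp_eq hWo husm (hW (subset_closure hx)) (hu1 x (subset_closure hx))]
  · intro y hy v
    obtain ⟨x, hx, rfl⟩ := hbij.surjOn hy
    have hxW := hW (subset_closure hx)
    set B := fderiv ℝ (gradient u) x with hB
    set A := fderiv ℝ (gradient ut) (gradient u x) with hA
    have hpsd : ∀ ξ, 0 ≤ ⟪ξ, B ξ⟫ := by
      intro ξ
      by_cases h : ξ = 0
      · simp [h]
      · exact (hupos x (subset_closure hx) ξ h).le
    have hsurj : Function.Surjective B := by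
      have hinj : Function.Injective B.toLinearMap :=
        Function.LeftInverse.injective (g := A) (hAB x hx)
      exact LinearMap.injective_iff_surjective.1 hinj
    obtain ⟨w, rfl⟩ := hsurj v
    rw [hAB x hx w, norm_sq_ev, real_inner_comm]
    calc ∑ i, ⟪ev n i, B w⟫ ^ 2 ≤ ∑ i, ⟪ev n i, B (ev n i)⟫ * ⟪w, B w⟫ :=
          Finset.sum_le_sum fun i _ => psd_cs B (A_symm hWo husm hxW) hpsd _ _
      _ = (∑ i, ⟪ev n i, B (ev n i)⟫) * ⟪w, B w⟫ := by rw [Finset.sum_mul]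
      _ ≤ c * ⟪w, B w⟫ := mul_le_mul_of_nonneg_right (hB1 x hx) (hpsd w)

lemma c_bounds (hn : 2 ≤ n) {Ω Ω' : Set (EuclideanSpace ℝ (Fin n))}
    (hΩo : IsOpen Ω) (hΩ'o : IsOpen Ω') (hne : Ω.Nonempty) (hne' : Ω'.Nonempty)
    (hΩb : Bornology.IsBounded Ω) (hΩ'c : IsCompact (closure Ω'))
    (hsub : closure Ω' ⊆ Metric.ball (0 : EuclideanSpace ℝ (Fin n)) 1) :
    ∃ c0 c2 : ℝ, 0 < c0 ∧ 0 < c2 ∧ ∀ (u ut : EuclideanSpace ℝ (Fin n) → ℝ) (c : ℝ),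
        IsSol n Ω Ω' u c → IsLegendre n Ω Ω' u ut → c0 ≤ c ∧ c ≤ c2 := by
  obtain ⟨R, hR, hRb⟩ := r_bounds Metric.isOpen_ball hΩ'c hsub (rr_smooth (n := n))
  obtain ⟨x0, hx0⟩ := hne
  obtain ⟨y0, hy0⟩ := hne'
  obtain ⟨ρ, hρ, hρb⟩ := Metric.nhds_basis_closedBall.mem_iff.1 (hΩo.mem_nhds hx0)
  obtain ⟨ρ', hρ', hρb'⟩ := Metric.nhds_basis_closedBall.mem_iff.1 (hΩ'o.mem_nhds hy0)
  obtain ⟨L, hL⟩ := hΩb.exists_norm_le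
  have hL0 : 0 ≤ L := (norm_nonneg _).trans (hL x0 hx0)
  set K : ℝ := 3 / ρ with hK
  set K' : ℝ := (2 * L + 1) / ρ' with hK'
  have hK0 : 0 < K := by positivity
  have hK'0 : 0 < K' := by positivity
  refine ⟨1 / K', K * ∑ _k : Option (Fin n), R ^ 2 + 1, by positivity, by positivity, ?_⟩
  intro u ut c hu hut
  obtain ⟨U, hU, H⟩ := sol_PDE hn hΩo hΩ'o ⟨x0, hx0⟩ hsub hu hut
  obtain ⟨⟨W, hWo, hW, husm⟩, hu1, hupos, hbij, hM⟩ := hu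
  obtain ⟨-, -, hgr⟩ := hut
  constructor
  · obtain ⟨y, hy, hess⟩ := interior_hess H.oU H.sm (L := L) (K := K') hρ'
      ((hρb'.trans subset_closure).trans H.sub) (fun y hy => by
        obtain ⟨x, hx, rfl⟩ := hbij.surjOn (hρb' hy)
        rw [hgr x hx]; exact hL x hx) (by rw [hK', div_mul_cancel₀ _ hρ'.ne']; linarith)
    have hyO := hρb' (Metric.ball_subset_closedBall hy)
    have hv := H.var hyO (fun k => (1 / K') • rr n k y)
    refine le_trans ?_ hv
    have h1 : ∀ k, 1 / K' * ‖rr n k y‖ ^ 2 ≤ 2 * ⟪rr n k y, (1 / K') • rr n k y⟫ -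
        ⟪(1 / K') • rr n k y, fderiv ℝ (gradient ut) y ((1 / K') • rr n k y)⟫ := by
      intro k
      have := hess ((1 / K') • rr n k y)
      rw [norm_smul, mul_pow, Real.norm_of_nonneg (by positivity : (0:ℝ) ≤ 1 / K')] at this
      rw [inner_smul_right, real_inner_self_eq_norm_sq]
      have h2 : K' * ((1 / K') ^ 2 * ‖rr n k y‖ ^ 2) = 1 / K' * ‖rr n k y‖ ^ 2 := by
        field_simp
      linarith
    have hy1 : ‖y‖ < 1 := by simpa using hsub (subset_closure hyO)
    have hs := one_sub_pos hy1
    have h3 : 1 ≤ ‖rr n (some ⟨0, by omega⟩) y‖ := by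
      simp only [rr]
      have hv := Real.sqrt_pos.2 hs
      have hss := Real.sqrt_pos.2 hv
      rw [norm_smul, ev_norm, mul_one, Real.norm_of_nonneg (by positivity), le_div_iff₀ hss, one_mul]
      refine Real.sqrt_le_iff.2 ⟨by norm_num, ?_⟩
      rw [one_pow]
      refine Real.sqrt_le_iff.2 ⟨by norm_num, ?_⟩
      nlinarith [sq_nonneg ‖y‖]
    have h4 : ∀ k, 0 ≤ 1 / K' * ‖rr n k y‖ ^ 2 := fun k => by positivity
    calc 1 / K' ≤ 1 / K' * ‖rr n (some ⟨0, by omega⟩) y‖ ^ 2 :=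
          le_mul_of_one_le_right (by positivity) (one_le_pow₀ h3)
      _ ≤ ∑ k, 1 / K' * ‖rr n k y‖ ^ 2 :=
          Finset.single_le_sum (f := fun k => 1 / K' * ‖rr n k y‖ ^ 2) (fun k _ => h4 k)
            (Finset.mem_univ _)
      _ ≤ _ := Finset.sum_le_sum fun k _ => h1 k
  · obtain ⟨x, hx, hess⟩ := interior_hess hWo husm (L := 1) (K := K) hρ
      ((hρb.trans subset_closure).trans hW)
      (fun x hx => (hu1 x (subset_closure (hρb hx))).le)
      (by rw [hK, div_mul_cancel₀ _ hρ.ne']; norm_num)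
    have hxO := hρb (Metric.ball_subset_closedBall hx)
    rw [← hM x hxO, MOp_eq hWo husm (hW (subset_closure hxO)) (hu1 x (subset_closure hxO)),
      Finset.mul_sum]
    have : ∑ k, ⟪rr n k (gradient u x), fderiv ℝ (gradient u) x (rr n k (gradient u x))⟫ ≤
        ∑ _k : Option (Fin n), K * R ^ 2 := by
      apply Finset.sum_le_sum
      intro k _
      refine (hess _).trans ?_
      have := (hRb _ (subset_closure (hbij.mapsTo hxO))).1 k
      gcongr
    linarith

lemma frontier_zero {Ω : Set (EuclideanSpace ℝ (Fin n))} {g : EuclideanSpace ℝ (Fin n) → ℝ}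
    (hg : Continuous g) (hΩ : Ω = {p | 0 < g p}) {y : EuclideanSpace ℝ (Fin n)}
    (hy : y ∈ frontier Ω) : g y = 0 := by
  subst hΩ
  have := frontier_lt_subset_eq continuous_const hg hy
  exact this.symm

end final
end LMC
/-- Lemma 4.5.  Boundary bound on tangential second derivatives of the
Legendre transform:  `⟨ς, D²ũ(y) ς⟩ ≤ C₃₀` for unit `ς` tangent to `∂Ω̃` at `y`. -/
theorem statement14 (n : ℕ) (hn : 2 ≤ n) (Ω Ω' : Set (EuclideanSpace ℝ (Fin n)))
    (g h : EuclideanSpace ℝ (Fin n) → ℝ) (θ₁ θ₂ : ℝ)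
    (hΩb : Bornology.IsBounded Ω) (hΩ'b : Bornology.IsBounded Ω')
    (hΩ : IsUnifConvexDefFn n Ω g θ₁) (hΩ' : IsUnifConvexDefFn n Ω' h θ₂)
    (hsub : closure Ω' ⊆ Metric.ball (0 : EuclideanSpace ℝ (Fin n)) 1) :
    ∃ C₃₀ : ℝ, 0 < C₃₀ ∧
      ∀ (u ut : EuclideanSpace ℝ (Fin n) → ℝ) (c : ℝ),
        IsSol n Ω Ω' u c → IsLegendre n Ω Ω' u ut →
        ∀ y ∈ frontier Ω', ∀ ς : EuclideanSpace ℝ (Fin n), ‖ς‖ = 1 →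
          ⟪ς, gradient h y⟫ = 0 →
          ⟪ς, fderiv ℝ (gradient ut) y ς⟫ ≤ C₃₀ := by
  obtain ⟨hg, hΩd, hgn, hθ1, hessg⟩ := hΩ
  obtain ⟨hh, hΩ'd, hhn, hθ2, hessh⟩ := hΩ'
  have hΩo : IsOpen Ω := by rw [hΩd]; exact isOpen_lt continuous_const hg.continuous
  have hΩ'o : IsOpen Ω' := by rw [hΩ'd]; exact isOpen_lt continuous_const hh.continuous
  have hΩc : IsCompact (closure Ω) := hΩb.isCompact_closure
  have hΩ'c : IsCompact (closure Ω') := hΩ'b.isCompact_closure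
  by_cases hne : Ω.Nonempty ∧ Ω'.Nonempty
  · obtain ⟨c0, c2, hc0, hc2, hcb⟩ :=
      LMC.c_bounds hn hΩo hΩ'o hne.1 hne.2 hΩb hΩ'c hsub
    obtain ⟨C, hC, hmain⟩ := LMC.core_est (r := LMC.rr n) (c0 := c0) (c2 := c2) hΩ'c hΩc
      Metric.isOpen_ball hsub LMC.rr_smooth hg hh hθ1 hθ2 hc0 hc2 hessg hessh hΩ'd
      (fun y hy => LMC.frontier_zero hh.continuous hΩ'd hy) hhn hgn
    refine ⟨C, hC, ?_⟩
    intro u ut c hu hut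
    obtain ⟨U, hU, H⟩ := LMC.sol_PDE hn hΩo hΩ'o hne.1 hsub hu hut
    obtain ⟨h1, h2⟩ := hcb u ut c hu hut
    obtain ⟨⟨W, hWo, hW, husm⟩, hu1, hupos, hbij, hM⟩ := hu
    obtain ⟨-, -, hgr⟩ := hut
    have hmapsO : Set.MapsTo (gradient ut) Ω' Ω := by
      intro y hy
      obtain ⟨x, hx, rfl⟩ := hbij.surjOn hy
      rw [hgr x hx]; exact hx
    have hcont : ContinuousOn (gradient ut) (closure Ω') :=
      (LMC.grad_smooth H.oU H.sm).continuousOn.mono H.sub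
    have hmaps : Set.MapsTo (gradient ut) (closure Ω') (closure Ω) :=
      hmapsO.closure_of_continuousOn hcont
    have hcontu : ContinuousOn (gradient u) (closure Ω) :=
      (LMC.grad_smooth hWo husm).continuousOn.mono hW
    have hfr : ∀ y ∈ frontier Ω', gradient ut y ∈ frontier Ω := by
      intro y hy
      have hyc : y ∈ closure Ω' := hy.1
      have hcl := hmaps hyc
      have hinv : gradient u (gradient ut y) = y := by
        have hc1 : ContinuousOn (fun z => gradient u (gradient ut z)) (closure Ω') :=
          hcontu.comp hcont hmaps
        have heq : Set.EqOn (fun z => gradient u (gradient ut z)) id (closure Ω') := by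
          refine Set.EqOn.of_subset_closure (s := Ω') ?_ hc1 continuousOn_id subset_closure subset_rfl
          intro z hz
          obtain ⟨x, hx, rfl⟩ := hbij.surjOn hz
          simp only [hgr x hx, id]
        exact heq hyc
      rw [hΩo.frontier_eq]
      refine ⟨hcl, fun hin => ?_⟩
      have : y ∈ Ω' := by rw [← hinv]; exact hbij.mapsTo hin
      rw [hΩ'o.frontier_eq] at hy
      exact hy.2 this
    exact hmain U ut c H h1 h2 hmaps
      (fun y hy => by
        have := hmapsO hy
        rw [hΩd] at this
        exact le_of_lt this)
      (fun y hy => ⟨hfr y hy, LMC.frontier_zero hg.continuous hΩd (hfr y hy)⟩)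
  · refine ⟨1, one_pos, ?_⟩
    intro u ut c hu hut y hy
    exfalso
    apply hne
    have h' : Ω'.Nonempty := closure_nonempty_iff.1 ⟨y, hy.1⟩
    obtain ⟨z, hz⟩ := h'
    obtain ⟨x, hx, -⟩ := hu.2.2.2.1.surjOn hz
    exact ⟨⟨x, hx⟩, ⟨z, hz⟩⟩
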